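/- arXiv:2409.14148 — 3 statements merged into one kernel-verified Lean document; each statement's English description precedes it below -/
import Mathlib

section
/- Let 𝒳, 𝒴, 𝒵_1, …, 𝒵_k be finite sets and R > 0. Let P_{XY}, Q_{XY} and P_{XZ_j}, Q_{XZ_j} (1 ≤ j ≤ k) be pmfs with common 𝒳-marginals P_X and Q_X respectively, such that D(P_{XY}‖Q_{XY}) < ∞ and D(P_{XZ_j}‖Q_{XZ_j}) < ∞ for all j. Then E_{P_{XY},Q_{XY}}(R) ≤ G_{P_{XY},Q_{XY},P_{XZ_1},Q_{XZ_1}}(R) + ∑_{j=1}^{k−1} G_{P_{XZ_j},Q_{XZ_j},P_{XZ_{j+1}},Q_{XZ_{j+1}}}(R) + E_{P_{XZ_k},Q_{XZ_k}}(R). -/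
open scoped BigOperators

noncomputable section

open Classical in
/-- Pushforward of a finitely supported mass function along a map. -/
def pushf {Ω α : Type*} [Fintype Ω] (p : Ω → ℝ) (f : Ω → α) : α → ℝ :=
  fun a => ∑ ω, if f ω = a then p ω else 0

/-- `p` is a probability mass function. -/
def IsPMF {α : Type*} [Fintype α] (p : α → ℝ) : Prop :=
  (∀ a, 0 ≤ p a) ∧ ∑ a, p a = 1

/-- Kullback–Leibler divergence `D(p‖q)` of mass functions, valued in `EReal`
(equal to `⊤` if `p` is not absolutely continuous w.r.t. `q`). -/
def klDiv {α : Type*} [Fintype α] (p q : α → ℝ) : EReal :=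
  if ∀ a, q a = 0 → p a = 0 then ((∑ a, p a * Real.log (p a / q a) : ℝ) : EReal) else ⊤

/-- Shannon entropy. -/
def entropy {α : Type*} [Fintype α] (p : α → ℝ) : ℝ :=
  -∑ a, p a * Real.log (p a)

/-- Conditional mutual information `I(A;B|C)` under the mass function `p`. -/
def condMI {Ω α β γ : Type*} [Fintype Ω] [Fintype α] [Fintype β] [Fintype γ]
    (p : Ω → ℝ) (A : Ω → α) (B : Ω → β) (C : Ω → γ) : ℝ :=
  entropy (pushf p (fun ω => (A ω, C ω))) + entropy (pushf p (fun ω => (B ω, C ω)))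
    - entropy (pushf p (fun ω => (A ω, B ω, C ω))) - entropy (pushf p C)

/-- First marginal of a joint mass function. -/
def margFst {α β : Type*} [Fintype α] [Fintype β] (p : α × β → ℝ) : α → ℝ :=
  fun a => ∑ b, p (a, b)

/-- Conditional mass function of the second coordinate given the first. -/
def condSnd {α β : Type*} [Fintype α] [Fintype β] (p : α × β → ℝ) : α → β → ℝ :=
  fun a b => p (a, b) / margFst p a

/-- Output distribution of a channel on an input distribution. -/
def outDist {α β : Type*} [Fintype α] [Fintype β] (ch : α → β → ℝ) (pa : α → ℝ) : β → ℝ :=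
  fun b => ∑ a, pa a * ch a b

/-- The difference functional
`f(P'_X) = sup_{Q̂_X ≪ Q_X} D(P'_Y‖Q̂_Y) − D(P'_Z‖Q̂_Z)`. -/
def fdiff {X Y Z : Type*} [Fintype X] [Fintype Y] [Fintype Z]
    (pYgX : X → Y → ℝ) (pZgX : X → Z → ℝ) (qYgX : X → Y → ℝ) (qZgX : X → Z → ℝ)
    (qX : X → ℝ) (pX' : X → ℝ) : EReal :=
  sSup {d : EReal | ∃ qhX : X → ℝ, IsPMF qhX ∧ (∀ x, qX x = 0 → qhX x = 0) ∧
    d = klDiv (outDist pYgX pX') (outDist qYgX qhX)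
        - klDiv (outDist pZgX pX') (outDist qZgX qhX)}

/-- The quantity `G_{P_XY, Q_XY, P_XZ, Q_XZ}(R)`: the supremum over finite sets `𝒰`
(represented by `Fin m`) and channels `P_{U|X}` with `I_P(U;X|Y) ≤ R` and `I_P(U;X|Z) ≤ R`
of `∑_u P_U(u) f(P_{X|U}(·|u))`. -/
def Gexp {X Y Z : Type*} [Fintype X] [Fintype Y] [Fintype Z]
    (pXY : X × Y → ℝ) (qXY : X × Y → ℝ) (pXZ : X × Z → ℝ) (qXZ : X × Z → ℝ)
    (R : ℝ) : EReal :=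
  sSup {v : EReal | ∃ (m : ℕ) (ch : X → Fin m → ℝ),
    (∀ x, IsPMF (ch x)) ∧
    condMI (fun w : Fin m × X × Y => ch w.2.1 w.1 * pXY (w.2.1, w.2.2))
      (fun w => w.1) (fun w => w.2.1) (fun w => w.2.2) ≤ R ∧
    condMI (fun w : Fin m × X × Z => ch w.2.1 w.1 * pXZ (w.2.1, w.2.2))
      (fun w => w.1) (fun w => w.2.1) (fun w => w.2.2) ≤ R ∧
    v = ∑ u : Fin m,
      ((∑ x, ch x u * margFst pXY x : ℝ) : EReal) *
        fdiff (condSnd pXY) (condSnd pXZ) (condSnd qXY) (condSnd qXZ)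
          (margFst qXY)
          (fun x => ch x u * margFst pXY x / ∑ x', ch x' u * margFst pXY x')}

/-- The error exponent of distributed hypothesis testing, via the Ahlswede–Csiszár
multi-letter characterization. -/
def errExp {X W : Type*} [Fintype X] [Fintype W]
    (pXW qXW : X × W → ℝ) (R : ℝ) : EReal :=
  sSup {v : EReal | ∃ n : ℕ, 0 < n ∧
    ∃ κ : (Fin n → X) → Fin (2 ^ ⌊(n : ℝ) * R⌋₊) → ℝ,
      (∀ x, IsPMF (κ x)) ∧
      v = (((n : ℝ)⁻¹ : ℝ) : EReal) *
        klDiv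
          (fun mw : Fin (2 ^ ⌊(n : ℝ) * R⌋₊) × (Fin n → W) =>
            ∑ x : Fin n → X, (∏ i, pXW (x i, mw.2 i)) * κ x mw.1)
          (fun mw : Fin (2 ^ ⌊(n : ℝ) * R⌋₊) × (Fin n → W) =>
            ∑ x : Fin n → X, (∏ i, qXW (x i, mw.2 i)) * κ x mw.1)}

/-!
An encoder `M` of `n` letters is an auxiliary variable whose conditional mutual information with
`Xⁿ` given `Yⁿ`, or given `Zⁿ`, is at most `nR`. Peel off the first letter: conditionally on
`Y₂ⁿ`, `M` is an auxiliary variable for `X₁`, and conditionally on `Z₁`, it is one for `X₂ⁿ`.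
The difference of the `n`-letter divergences towards `Yⁿ` and `Zⁿ` splits exactly, by telescoping
through the hybrid output `(Z₁, Y₂ⁿ)`, while the chain rule and convexity make the two rates
superadditive. Iterating, the variable `(M, Z^{i-1}, Y_{i+1}ⁿ)`, with `i` uniform, is admissible in
`G(R)`, so passing from `Y` to `Z` changes the exponent of the same encoder by at most `G(R)`;
chaining the receivers gives the theorem.

Auxiliary variables are handled through the weights `g u = P(u | ·)`, left unnormalised so that
sums over `i` and conditioning remain linear operations.
-/

section KLSum

variable {ι κ : Type*} [Fintype ι] [Fintype κ]

/-- The real number `∑ a log (a / b)`, i.e. the Kullback–Leibler divergence of weights `a ≪ b`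
that need not have total mass `1`. -/
def klSum (a b : ι → ℝ) : ℝ := ∑ i, a i * Real.log (a i / b i)

lemma klDiv_eq_klSum {a b : ι → ℝ} (hab : ∀ i, b i = 0 → a i = 0) :
    klDiv a b = (klSum a b : EReal) := if_pos hab

lemma eq_zero_of_klDiv_lt_top {a b : ι → ℝ} (h : klDiv a b < ⊤) (i : ι) (hi : b i = 0) :
    a i = 0 := by
  by_contra ha
  exact h.ne (if_neg fun hab => ha (hab i hi))

lemma klSum_smul (c : ℝ) (a b : ι → ℝ) : klSum (c • a) (c • b) = c * klSum a b := by
  rcases eq_or_ne c 0 with rfl | hc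
  · simp [klSum]
  · simp only [klSum, Pi.smul_apply, smul_eq_mul, Finset.mul_sum, mul_div_mul_left _ _ hc,
      mul_assoc]

lemma klSum_smul_smul {a b : ι → ℝ} (hab : ∀ i, b i = 0 → a i = 0) {c d : ℝ} (hc : c ≠ 0)
    (hd : d ≠ 0) :
    klSum (c • a) (d • b) = c * (klSum a b + (∑ i, a i) * Real.log (c / d)) := by
  simp only [klSum, Pi.smul_apply, smul_eq_mul, Finset.sum_mul, ← Finset.sum_add_distrib,
    Finset.mul_sum]
  refine Finset.sum_congr rfl fun i _ => ?_
  rcases eq_or_ne (a i) 0 with ha | ha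
  · simp [ha]
  have hb : b i ≠ 0 := fun hb => ha (hab i hb)
  rw [mul_div_mul_comm, Real.log_mul (div_ne_zero hc hd) (div_ne_zero ha hb)]
  ring

lemma klSum_smul_right_self (c : ℝ) (a : ι → ℝ) :
    klSum a (c • a) = -((∑ i, a i) * Real.log c) := by
  simp only [klSum, Pi.smul_apply, smul_eq_mul, Finset.sum_mul, ← Finset.sum_neg_distrib]
  refine Finset.sum_congr rfl fun i _ => ?_
  rcases eq_or_ne (a i) 0 with ha | ha
  · simp [ha]
  · rw [div_mul_cancel_right₀ ha, Real.log_inv, mul_neg]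

/-- The tangent at `a / b = c` of the convex function `t ↦ t log t`, rescaled by `b`. -/
lemma mul_log_add_sub_le_mul_log_div {a b c : ℝ} (ha : 0 ≤ a) (hb : 0 ≤ b) (hab : b = 0 → a = 0)
    (hc : 0 < c) : a * Real.log c + (a - b * c) ≤ a * Real.log (a / b) := by
  rcases ha.eq_or_lt with rfl | ha
  · simpa using mul_nonneg hb hc.le
  have hb : 0 < b := hb.lt_of_ne' fun h => ha.ne' (hab h)
  have hlog := Real.log_le_sub_one_of_pos (x := c / (a / b)) (by positivity)
  rw [Real.log_div hc.ne' (by positivity)] at hlog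
  calc a * Real.log c + (a - b * c)
      = a * Real.log (a / b) + a * (Real.log c - Real.log (a / b) - (c / (a / b) - 1)) := by
        field_simp
        ring
    _ ≤ a * Real.log (a / b) :=
        add_le_of_nonpos_right (mul_nonpos_of_nonneg_of_nonpos ha.le (by linarith))

lemma sum_mul_log_sum_div_sum_le {a b : ι → ℝ} (ha : ∀ i, 0 ≤ a i) (hb : ∀ i, 0 ≤ b i)
    (hab : ∀ i, b i = 0 → a i = 0) :
    (∑ i, a i) * Real.log ((∑ i, a i) / ∑ i, b i) ≤ klSum a b := by
  rcases (Finset.sum_nonneg fun i _ => ha i : 0 ≤ ∑ i, a i).eq_or_lt with hA | hA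
  · have ha0 := (Fintype.sum_eq_zero_iff_of_nonneg ha).1 hA.symm
    simp [klSum, ha0]
  have hB : 0 < ∑ i, b i := by
    refine (Finset.sum_nonneg fun i _ => hb i).lt_of_ne' fun hB => hA.ne' ?_
    have hb0 := (Fintype.sum_eq_zero_iff_of_nonneg hb).1 hB
    exact Finset.sum_eq_zero fun i _ => hab i (congrFun hb0 i)
  calc (∑ i, a i) * Real.log ((∑ i, a i) / ∑ i, b i)
      = ∑ i, (a i * Real.log ((∑ i, a i) / ∑ i, b i)
          + (a i - b i * ((∑ i, a i) / ∑ i, b i))) := by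
        rw [Finset.sum_add_distrib, Finset.sum_sub_distrib, ← Finset.sum_mul, ← Finset.sum_mul,
          mul_div_cancel₀ _ hB.ne', sub_self, add_zero]
    _ ≤ klSum a b := Finset.sum_le_sum fun i _ =>
        mul_log_add_sub_le_mul_log_div (ha i) (hb i) (hab i) (div_pos hA hB)

lemma klSum_sum_le {a b : κ → ι → ℝ} (ha : ∀ k i, 0 ≤ a k i) (hb : ∀ k i, 0 ≤ b k i)
    (hab : ∀ k i, b k i = 0 → a k i = 0) :
    klSum (∑ k, a k) (∑ k, b k) ≤ ∑ k, klSum (a k) (b k) := by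
  simp only [klSum, Finset.sum_apply]
  rw [Finset.sum_comm]
  exact Finset.sum_le_sum fun i _ =>
    sum_mul_log_sum_div_sum_le (ha · i) (hb · i) (hab · i)

end KLSum

section Sums

variable {A B A₁ A₂ B₁ B₂ : Type*} [Fintype A] [Fintype B] [Fintype A₁] [Fintype A₂] [Fintype B₁]
  [Fintype B₂]

lemma sum_prod_prod_comm (F : (A₁ × A₂) × (B₁ × B₂) → ℝ) :
    ∑ w, F w = ∑ w₁ : A₁ × B₁, ∑ w₂ : A₂ × B₂, F ((w₁.1, w₂.1), (w₁.2, w₂.2)) := by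
  rw [← (Equiv.prodProdProdComm A₁ B₁ A₂ B₂).sum_comp, Fintype.sum_prod_type]
  rfl

lemma sum_margFst_mul (p : A × B → ℝ) (F : A → ℝ) :
    ∑ a, margFst p a * F a = ∑ w, p w * F w.1 := by
  simp only [margFst, Finset.sum_mul, Fintype.sum_prod_type]

lemma margFst_nonneg {p : A × B → ℝ} (hp : ∀ w, 0 ≤ p w) (a : A) : 0 ≤ margFst p a :=
  Finset.sum_nonneg fun _ _ => hp _

lemma eq_zero_of_margFst_eq_zero {p : A × B → ℝ} (hp : ∀ w, 0 ≤ p w) {a : A}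
    (ha : margFst p a = 0) (b : B) : p (a, b) = 0 :=
  congrFun ((Fintype.sum_eq_zero_iff_of_nonneg fun b => hp (a, b)).1 ha) b

end Sums

section OutWeight

variable {ι A B A₁ A₂ B₁ B₂ : Type*} [Fintype A] [Fintype A₁] [Fintype A₂]

/-- The mass `∑ₐ p(a, b) g(a)` at `b` after reweighting the joint mass function `p` by `g`. For
`g = P(u | ·)` this is the joint probability `P(u, b)`, and for `g = 1` the second marginal. -/
def outWeight (p : A × B → ℝ) (g : A → ℝ) (b : B) : ℝ := ∑ a, p (a, b) * g a

lemma outWeight_nonneg {p : A × B → ℝ} {g : A → ℝ} (hp : ∀ w, 0 ≤ p w) (hg : ∀ a, 0 ≤ g a)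
    (b : B) : 0 ≤ outWeight p g b :=
  Finset.sum_nonneg fun a _ => mul_nonneg (hp _) (hg a)

lemma outWeight_pos {p : A × B → ℝ} {g : A → ℝ} (hp : ∀ w, 0 ≤ p w) (hg : ∀ a, 0 ≤ g a)
    {a : A} {b : B} (hpa : p (a, b) ≠ 0) (hga : g a ≠ 0) : 0 < outWeight p g b :=
  Finset.sum_pos' (fun a _ => mul_nonneg (hp _) (hg a))
    ⟨a, Finset.mem_univ a, mul_pos ((hp _).lt_of_ne' hpa) ((hg a).lt_of_ne' hga)⟩

lemma outWeight_one_pos {p : A × B → ℝ} (hp : ∀ w, 0 ≤ p w) {a : A} {b : B}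
    (hpa : p (a, b) ≠ 0) : 0 < outWeight p 1 b :=
  outWeight_pos hp (fun _ => zero_le_one) hpa one_ne_zero

lemma outWeight_eq_zero_of_ac {p q : A × B → ℝ} {g h : A → ℝ} (hq : ∀ w, 0 ≤ q w)
    (hh : ∀ a, 0 ≤ h a) (hpq : ∀ w, q w = 0 → p w = 0) (hgh : ∀ a, h a = 0 → g a = 0) {b : B}
    (hb : outWeight q h b = 0) : outWeight p g b = 0 := by
  have hqh := (Fintype.sum_eq_zero_iff_of_nonneg fun a => mul_nonneg (hq (a, b)) (hh a)).1 hb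
  refine Finset.sum_eq_zero fun a _ => ?_
  rcases mul_eq_zero.1 (congrFun hqh a) with h | h
  · rw [hpq _ h, zero_mul]
  · rw [hgh _ h, mul_zero]

lemma outWeight_smul (p : A × B → ℝ) (c : ℝ) (g : A → ℝ) :
    outWeight p (c • g) = c • outWeight p g := by
  ext b
  simp only [outWeight, Pi.smul_apply, smul_eq_mul, Finset.mul_sum, mul_left_comm]

lemma outWeight_sum [Fintype ι] (p : A × B → ℝ) (g : ι → A → ℝ) :
    outWeight p (∑ i, g i) = ∑ i, outWeight p (g i) := by
  ext b
  simp only [outWeight, Finset.sum_apply, Finset.mul_sum]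
  exact Finset.sum_comm

lemma sum_outWeight [Fintype B] (p : A × B → ℝ) (g : A → ℝ) :
    ∑ b, outWeight p g b = ∑ a, g a * margFst p a := by
  simp only [mul_comm (g _), sum_margFst_mul, Fintype.sum_prod_type_right, outWeight]

lemma outWeight_comp_equiv (e : A₁ ≃ A₂) (f : B₁ → B₂) (p : A₂ × B₂ → ℝ) (g : A₂ → ℝ) (b : B₁) :
    outWeight (p ∘ Prod.map e f) (g ∘ e) b = outWeight p g (f b) :=
  e.sum_comp fun a => p (a, f b) * g a

/-- The product of two joint mass functions, as a joint mass function of the pair of first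
coordinates and the pair of second coordinates. -/
def jointProd (p₁ : A₁ × B₁ → ℝ) (p₂ : A₂ × B₂ → ℝ) : (A₁ × A₂) × (B₁ × B₂) → ℝ :=
  fun w => p₁ (w.1.1, w.2.1) * p₂ (w.1.2, w.2.2)

/-- `outWeight` in the first of two input coordinates, as a weight on the second. -/
def outWeightFst (p₁ : A₁ × B₁ → ℝ) (g : A₁ × A₂ → ℝ) (b₁ : B₁) : A₂ → ℝ :=
  fun a₂ => outWeight p₁ (fun a₁ => g (a₁, a₂)) b₁

/-- `outWeight` in the second of two input coordinates, as a weight on the first. -/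
def outWeightSnd (p₂ : A₂ × B₂ → ℝ) (g : A₁ × A₂ → ℝ) (b₂ : B₂) : A₁ → ℝ :=
  fun a₁ => outWeight p₂ (fun a₂ => g (a₁, a₂)) b₂

omit [Fintype A₂] in
lemma outWeightFst_eq_sum (p₁ : A₁ × B₁ → ℝ) (g : A₁ × A₂ → ℝ) (b₁ : B₁) :
    outWeightFst p₁ g b₁ = ∑ a₁, p₁ (a₁, b₁) • fun a₂ => g (a₁, a₂) := by
  ext a₂
  simp [outWeightFst, outWeight]

lemma outWeight_jointProd_eq_outWeightSnd (p₁ : A₁ × B₁ → ℝ) (p₂ : A₂ × B₂ → ℝ) (g : A₁ × A₂ → ℝ)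
    (b : B₁ × B₂) :
    outWeight (jointProd p₁ p₂) g b = outWeight p₁ (outWeightSnd p₂ g b.2) b.1 := by
  simp only [outWeight, outWeightSnd, jointProd, Fintype.sum_prod_type, Finset.mul_sum, mul_assoc]

lemma outWeight_jointProd_eq_outWeightFst (p₁ : A₁ × B₁ → ℝ) (p₂ : A₂ × B₂ → ℝ) (g : A₁ × A₂ → ℝ)
    (b : B₁ × B₂) :
    outWeight (jointProd p₁ p₂) g b = outWeight p₂ (outWeightFst p₁ g b.1) b.2 := by
  simp only [outWeight, outWeightFst, jointProd, Fintype.sum_prod_type_right, Finset.mul_sum,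
    mul_assoc, mul_left_comm]

lemma outWeight_jointProd_one (p₁ : A₁ × B₁ → ℝ) (p₂ : A₂ × B₂ → ℝ) (b : B₁ × B₂) :
    outWeight (jointProd p₁ p₂) 1 b = outWeight p₁ 1 b.1 * outWeight p₂ 1 b.2 := by
  simp [outWeight, jointProd, Fintype.sum_prod_type, Finset.sum_mul_sum]

end OutWeight

section CondMITerm

variable {ι A B A₁ A₂ B₁ B₂ C₁ C₂ : Type*} [Fintype ι] [Fintype A] [Fintype B] [Fintype A₁]
  [Fintype A₂] [Fintype B₁] [Fintype B₂] [Fintype C₁] [Fintype C₂]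

/-- The contribution `∑ p(a, b) g(a) log (P(u | a) / P(u | b))` of one value `u` of an auxiliary
variable `U` to `I(U; A | B)`, where `g = P(u | ·)` and `p` is the joint mass function of
`(A, B)`. -/
def condMITerm (p : A × B → ℝ) (g : A → ℝ) : ℝ :=
  ∑ w, p w * g w.1 * Real.log (g w.1 / (outWeight p g w.2 / outWeight p 1 w.2))

lemma condMITerm_eq_klSum (p : A × B → ℝ) (g : A → ℝ) :
    condMITerm p g
      = klSum (fun w => p w * g w.1) fun w => p w * (outWeight p g w.2 / outWeight p 1 w.2) := by
  refine Finset.sum_congr rfl fun w _ => ?_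
  rcases eq_or_ne (p w) 0 with hp | hp
  · simp [hp]
  · rw [mul_div_mul_left _ _ hp]

lemma condMITerm_smul (p : A × B → ℝ) (c : ℝ) (g : A → ℝ) :
    condMITerm p (c • g) = c * condMITerm p g := by
  rw [condMITerm_eq_klSum, condMITerm_eq_klSum, ← klSum_smul, outWeight_smul]
  congr 1 <;> ext w <;> simp only [Pi.smul_apply, smul_eq_mul] <;> ring

/-- Both arguments of the divergence in `condMITerm_eq_klSum` are linear in the weight, so this is
joint convexity of the divergence. -/
lemma condMITerm_sum_le {p : A × B → ℝ} (hp : ∀ w, 0 ≤ p w) {g : ι → A → ℝ}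
    (hg : ∀ i a, 0 ≤ g i a) : condMITerm p (∑ i, g i) ≤ ∑ i, condMITerm p (g i) := by
  have hnum : (fun w : A × B => p w * (∑ i, g i) w.1) = ∑ i, fun w => p w * g i w.1 := by
    ext w
    simp only [Finset.sum_apply, Finset.mul_sum]
  have hden : (fun w : A × B => p w * (outWeight p (∑ i, g i) w.2 / outWeight p 1 w.2))
      = ∑ i, fun w => p w * (outWeight p (g i) w.2 / outWeight p 1 w.2) := by
    ext w
    simp only [outWeight_sum, Finset.sum_apply, Finset.sum_div, Finset.mul_sum]
  have hone (b : B) : 0 ≤ outWeight p 1 b := outWeight_nonneg hp (fun _ => zero_le_one) b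
  simp only [condMITerm_eq_klSum, hnum, hden]
  refine klSum_sum_le (fun i w => mul_nonneg (hp w) (hg i _))
    (fun i w => mul_nonneg (hp w) (div_nonneg (outWeight_nonneg hp (hg i) _) (hone _)))
    fun i w hw => ?_
  by_contra hpg
  obtain ⟨hpw, hgw⟩ := mul_ne_zero_iff.1 hpg
  exact mul_ne_zero hpw
    (div_ne_zero (outWeight_pos hp (hg i) hpw hgw).ne' (outWeight_one_pos hp hpw).ne') hw

/-- `log P(u | a) ≤ 0` bounds the term of `I(U; A | B)` by the corresponding term of `H(U | B)`. -/
lemma condMITerm_le_neg_klSum {p : A × B → ℝ} (hp : ∀ w, 0 ≤ p w) {g : A → ℝ}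
    (hg : ∀ a, 0 ≤ g a) (hg1 : ∀ a, g a ≤ 1) :
    condMITerm p g ≤ -klSum (outWeight p g) (outWeight p 1) := by
  have hklSum : -klSum (outWeight p g) (outWeight p 1)
      = ∑ w, p w * g w.1 * -Real.log (outWeight p g w.2 / outWeight p 1 w.2) := by
    rw [Fintype.sum_prod_type_right, klSum, ← Finset.sum_neg_distrib]
    refine Finset.sum_congr rfl fun b _ => ?_
    simp only [mul_neg, Finset.sum_neg_distrib, ← Finset.sum_mul]
    rfl
  rw [hklSum]
  refine Finset.sum_le_sum fun w _ => ?_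
  rcases eq_or_ne (p w * g w.1) 0 with h | h
  · simp [h]
  obtain ⟨hpw, hgw⟩ := mul_ne_zero_iff.1 h
  have hquot := div_pos (outWeight_pos hp hg hpw hgw) (outWeight_one_pos hp hpw)
  rw [Real.log_div hgw hquot.ne']
  have hlog := Real.log_nonpos (hg w.1) (hg1 w.1)
  exact mul_le_mul_of_nonneg_left (by linarith) (mul_nonneg (hp w) (hg _))

lemma sum_condMITerm_le_log_card {p : A × B → ℝ} (hp : IsPMF p) {g : ι → A → ℝ}
    (hg : ∀ i a, 0 ≤ g i a) (hsum : ∑ i, g i = 1) :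
    ∑ i, condMITerm p (g i) ≤ Real.log (Fintype.card ι) := by
  have hg1 (i : ι) (a : A) : g i a ≤ 1 := by
    have hle := Finset.single_le_sum (fun j _ => hg j a) (Finset.mem_univ i)
    rwa [← Finset.sum_apply, hsum] at hle
  have hone (b : B) : 0 ≤ outWeight p 1 b := outWeight_nonneg hp.1 (fun _ => zero_le_one) b
  have hmass : ∑ b, outWeight p 1 b = 1 := by
    simp only [sum_outWeight, Pi.one_apply, one_mul, margFst, ← Fintype.sum_prod_type, hp.2]
  have hlogsum : -Real.log (Fintype.card ι)
      ≤ ∑ i, klSum (outWeight p (g i)) (outWeight p 1) := by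
    convert klSum_sum_le (fun i b => outWeight_nonneg hp.1 (hg i) b) (fun _ => hone)
      fun i b hb => outWeight_eq_zero_of_ac (g := g i) hp.1 (fun _ => zero_le_one)
        (fun _ h => h) (fun a ha => absurd ha one_ne_zero) hb
    rw [← outWeight_sum, hsum, Finset.sum_const, Finset.card_univ, ← Nat.cast_smul_eq_nsmul ℝ,
      klSum_smul_right_self, hmass, one_mul]
  calc ∑ i, condMITerm p (g i)
      ≤ ∑ i, -klSum (outWeight p (g i)) (outWeight p 1) :=
        Finset.sum_le_sum fun i _ => condMITerm_le_neg_klSum hp.1 (hg i) (hg1 i)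
    _ ≤ Real.log (Fintype.card ι) := by
        rw [Finset.sum_neg_distrib]
        exact neg_le.1 hlogsum

lemma condMITerm_comp_equiv (e : A₁ ≃ A₂) (f : B₁ ≃ B₂) (p : A₂ × B₂ → ℝ) (g : A₂ → ℝ) :
    condMITerm (p ∘ Prod.map e f) (g ∘ e) = condMITerm p g := by
  have hone (b : B₁) : outWeight (p ∘ Prod.map e f) 1 b = outWeight p 1 (f b) :=
    outWeight_comp_equiv e f p 1 b
  simp only [condMITerm, outWeight_comp_equiv, hone]
  exact (e.prodCongr f).sum_comp fun w =>
    p w * g w.1 * Real.log (g w.1 / (outWeight p g w.2 / outWeight p 1 w.2))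

lemma sum_margFst_mul_condMITerm (p₁ : A₁ × B₁ → ℝ) (p₂ : A₂ × B₂ → ℝ) (g : A₁ × A₂ → ℝ) :
    ∑ a₁, margFst p₁ a₁ * condMITerm p₂ (fun a₂ => g (a₁, a₂))
      = ∑ w, jointProd p₁ p₂ w * g w.1 * Real.log (g w.1 /
          (outWeightSnd p₂ g w.2.2 w.1.1 / outWeight p₂ 1 w.2.2)) := by
  rw [sum_margFst_mul, sum_prod_prod_comm]
  simp only [condMITerm, jointProd, outWeightSnd, Finset.mul_sum, mul_assoc]

lemma sum_condMITerm_outWeightSnd (p₁ : A₁ × B₁ → ℝ) (p₂ : A₂ × B₂ → ℝ) (g : A₁ × A₂ → ℝ) :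
    ∑ b₂, condMITerm p₁ (outWeightSnd p₂ g b₂)
      = ∑ w, jointProd p₁ p₂ w * g w.1 * Real.log (outWeightSnd p₂ g w.2.2 w.1.1 /
          (outWeight (jointProd p₁ p₂) g w.2 / outWeight p₁ 1 w.2.1)) := by
  have hsum_snd (a₁ : A₁) (b₁ : B₁) (b₂ : B₂) :
      ∑ a₂, jointProd p₁ p₂ ((a₁, a₂), (b₁, b₂)) * g (a₁, a₂)
        = p₁ (a₁, b₁) * outWeightSnd p₂ g b₂ a₁ := by
    simp only [jointProd, outWeightSnd, outWeight, Finset.mul_sum, mul_assoc]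
  rw [sum_prod_prod_comm]
  simp only [condMITerm, Fintype.sum_prod_type_right (α₁ := A₂), ← Finset.sum_mul, hsum_snd,
    outWeight_jointProd_eq_outWeightSnd]
  exact Finset.sum_comm

/-- The chain rule `I(U; A₁A₂ | B₁B₂) = I(U; A₂ | A₁ B₂) + I(U; A₁ | B₁B₂)` for independent pairs
`(A₁, B₁)` and `(A₂, B₂)`. -/
lemma condMITerm_jointProd {p₁ : A₁ × B₁ → ℝ} {p₂ : A₂ × B₂ → ℝ} (hp₁ : ∀ w, 0 ≤ p₁ w)
    (hp₂ : ∀ w, 0 ≤ p₂ w) {g : A₁ × A₂ → ℝ} (hg : ∀ a, 0 ≤ g a) :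
    condMITerm (jointProd p₁ p₂) g
      = ∑ a₁, margFst p₁ a₁ * condMITerm p₂ (fun a₂ => g (a₁, a₂))
        + ∑ b₂, condMITerm p₁ (outWeightSnd p₂ g b₂) := by
  rw [sum_margFst_mul_condMITerm, sum_condMITerm_outWeightSnd, ← Finset.sum_add_distrib]
  refine Finset.sum_congr rfl fun ⟨⟨a₁, a₂⟩, b₁, b₂⟩ _ => ?_
  rw [← mul_add]
  rcases eq_or_ne (jointProd p₁ p₂ ((a₁, a₂), (b₁, b₂)) * g (a₁, a₂)) 0 with h | h
  · simp only [h, zero_mul]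
  obtain ⟨hp, hga⟩ := mul_ne_zero_iff.1 h
  obtain ⟨hpa₁, hpa₂⟩ := mul_ne_zero_iff.1 hp
  have hone₁ := outWeight_one_pos hp₁ hpa₁
  have hone₂ := outWeight_one_pos hp₂ hpa₂
  have hsnd : 0 < outWeightSnd p₂ g b₂ a₁ := outWeight_pos hp₂ (fun _ => hg _) hpa₂ hga
  have hboth : 0 < outWeight (jointProd p₁ p₂) g (b₁, b₂) :=
    outWeight_pos (fun w => mul_nonneg (hp₁ _) (hp₂ _)) hg hp hga
  have hga := (hg (a₁, a₂)).lt_of_ne' hga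
  rw [outWeight_jointProd_one, ← Real.log_mul (by positivity) (by positivity)]
  congr 2
  field_simp

lemma condMITerm_jointProd_swap (p₁ : A₁ × B₁ → ℝ) (p₂ : A₂ × B₂ → ℝ) (g : A₁ × A₂ → ℝ) :
    condMITerm (jointProd p₂ p₁) (g ∘ Prod.swap) = condMITerm (jointProd p₁ p₂) g := by
  rw [← condMITerm_comp_equiv (Equiv.prodComm A₂ A₁) (Equiv.prodComm B₂ B₁)]
  congr 1
  ext w
  exact mul_comm _ _

lemma sum_condMITerm_outWeight_le_of_fst {p₁ : A₁ × B₁ → ℝ} {p₂ : A₂ × B₂ → ℝ} {r₁ : A₁ × C₁ → ℝ}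
    (hp₁ : ∀ w, 0 ≤ p₁ w) (hp₂ : ∀ w, 0 ≤ p₂ w) (hr₁ : ∀ w, 0 ≤ r₁ w)
    (hmarg : margFst p₁ = margFst r₁) {g : A₁ × A₂ → ℝ} (hg : ∀ a, 0 ≤ g a) :
    ∑ b₂, condMITerm p₁ (outWeightSnd p₂ g b₂) + ∑ c₁, condMITerm p₂ (outWeightFst r₁ g c₁)
      ≤ condMITerm (jointProd p₁ p₂) g := by
  have hfst : ∑ c₁, condMITerm p₂ (outWeightFst r₁ g c₁)
      ≤ ∑ a₁, margFst p₁ a₁ * condMITerm p₂ (fun a₂ => g (a₁, a₂)) :=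
    calc ∑ c₁, condMITerm p₂ (outWeightFst r₁ g c₁)
        ≤ ∑ c₁, ∑ a₁, r₁ (a₁, c₁) * condMITerm p₂ (fun a₂ => g (a₁, a₂)) := by
          refine Finset.sum_le_sum fun c₁ _ => ?_
          simp only [outWeightFst_eq_sum, ← condMITerm_smul]
          exact condMITerm_sum_le hp₂ fun a₁ a₂ => mul_nonneg (hr₁ _) (hg _)
      _ = ∑ a₁, margFst p₁ a₁ * condMITerm p₂ (fun a₂ => g (a₁, a₂)) := by
          rw [hmarg, sum_margFst_mul, Fintype.sum_prod_type_right]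
  rw [condMITerm_jointProd hp₁ hp₂ hg]
  linarith

lemma sum_condMITerm_outWeight_le_of_snd {p₁ : A₁ × B₁ → ℝ} {p₂ : A₂ × B₂ → ℝ} {r₂ : A₂ × C₂ → ℝ}
    (hp₁ : ∀ w, 0 ≤ p₁ w) (hp₂ : ∀ w, 0 ≤ p₂ w) (hr₂ : ∀ w, 0 ≤ r₂ w)
    (hmarg : margFst p₂ = margFst r₂) {g : A₁ × A₂ → ℝ} (hg : ∀ a, 0 ≤ g a) :
    ∑ c₂, condMITerm p₁ (outWeightSnd r₂ g c₂) + ∑ b₁, condMITerm p₂ (outWeightFst p₁ g b₁)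
      ≤ condMITerm (jointProd p₁ p₂) g := by
  rw [← condMITerm_jointProd_swap, add_comm]
  exact sum_condMITerm_outWeight_le_of_fst hp₂ hp₁ hr₂ hmarg (g := g ∘ Prod.swap) fun _ => hg _

end CondMITerm

/-- A simple hypothesis testing problem: a null and an alternative joint mass function of an
observed pair, the former dominated by the latter. The alternative need not be normalised. -/
@[ext] structure HypothesisPair (A B : Type*) [Fintype A] [Fintype B] where
  null : A × B → ℝ
  alt : A × B → ℝ
  isPMF_null : IsPMF null
  alt_nonneg : ∀ w, 0 ≤ alt w
  ac : ∀ w, alt w = 0 → null w = 0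

namespace HypothesisPair

variable {A B A₁ A₂ B₁ B₂ : Type*} [Fintype A] [Fintype B] [Fintype A₁] [Fintype A₂]
  [Fintype B₁] [Fintype B₂]

lemma null_nonneg (T : HypothesisPair A B) (w : A × B) : 0 ≤ T.null w := T.isPMF_null.1 w

/-- The pair of hypotheses for two independent observations. -/
def prod (T₁ : HypothesisPair A₁ B₁) (T₂ : HypothesisPair A₂ B₂) :
    HypothesisPair (A₁ × A₂) (B₁ × B₂) where
  null := jointProd T₁.null T₂.null
  alt := jointProd T₁.alt T₂.alt
  isPMF_null := by
    refine ⟨fun w => mul_nonneg (T₁.null_nonneg _) (T₂.null_nonneg _), ?_⟩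
    rw [sum_prod_prod_comm]
    simp only [jointProd, ← Finset.sum_mul_sum, T₁.isPMF_null.2, T₂.isPMF_null.2, mul_one]
  alt_nonneg w := mul_nonneg (T₁.alt_nonneg _) (T₂.alt_nonneg _)
  ac w hw := mul_eq_zero.2 ((mul_eq_zero.1 hw).imp (T₁.ac _) (T₂.ac _))

/-- The pair of hypotheses obtained by relabelling both observations. -/
def comap (e : A₁ ≃ A₂) (f : B₁ ≃ B₂) (T : HypothesisPair A₂ B₂) : HypothesisPair A₁ B₁ where
  null := T.null ∘ Prod.map e f
  alt := T.alt ∘ Prod.map e f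
  isPMF_null := ⟨fun _ => T.null_nonneg _, ((e.prodCongr f).sum_comp T.null).trans T.isPMF_null.2⟩
  alt_nonneg _ := T.alt_nonneg _
  ac _ := T.ac _

/-- The pair of hypotheses for `n` independent observations. -/
def pow (T : HypothesisPair A B) (n : ℕ) : HypothesisPair (Fin n → A) (Fin n → B) where
  null w := ∏ i, T.null (w.1 i, w.2 i)
  alt w := ∏ i, T.alt (w.1 i, w.2 i)
  isPMF_null := by
    refine ⟨fun w => Finset.prod_nonneg fun i _ => T.null_nonneg _, ?_⟩
    rw [← one_pow n, ← T.isPMF_null.2, Fintype.sum_pow,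
      ← (Equiv.arrowProdEquivProdArrow (Fin n) (fun _ => A) fun _ => B).sum_comp]
    rfl
  alt_nonneg w := Finset.prod_nonneg fun i _ => T.alt_nonneg _
  ac w hw := by
    obtain ⟨i, hi, hzero⟩ := Finset.prod_eq_zero_iff.1 hw
    exact Finset.prod_eq_zero hi (T.ac _ hzero)

lemma pow_succ (T : HypothesisPair A B) (n : ℕ) :
    T.pow (n + 1) = (T.prod (T.pow n)).comap (Fin.consEquiv fun _ => A).symm
      (Fin.consEquiv fun _ => B).symm := by
  ext w <;> exact Fin.prod_univ_succ _

lemma margFst_pow (T : HypothesisPair A B) (n : ℕ) (a : Fin n → A) :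
    margFst (T.pow n).null a = ∏ i, margFst T.null (a i) := by
  classical
  simp only [margFst, Finset.prod_univ_sum, Fintype.piFinset_univ, pow]

/-- The divergence `∑ P(u, b) log (P(u, b) / Q(u, b))` contributed by one value `u` of an auxiliary
variable with `g = P(u | ·)` under the null and `h = Q(u | ·)` under the alternative. -/
def outDiv (T : HypothesisPair A B) (g h : A → ℝ) : ℝ :=
  klSum (outWeight T.null g) (outWeight T.alt h)

lemma outDiv_smul (T : HypothesisPair A B) (c : ℝ) (g h : A → ℝ) :
    T.outDiv (c • g) (c • h) = c * T.outDiv g h := by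
  rw [outDiv, outWeight_smul, outWeight_smul, klSum_smul, outDiv]

lemma outDiv_pow_zero {C : Type*} [Fintype C] (T : HypothesisPair A B) (S : HypothesisPair A C)
    (g h : (Fin 0 → A) → ℝ) : (T.pow 0).outDiv g h = (S.pow 0).outDiv g h := by
  simp [outDiv, klSum, outWeight, pow]

lemma condMITerm_pow_zero (T : HypothesisPair A B) (g : (Fin 0 → A) → ℝ) :
    condMITerm (T.pow 0).null g = 0 := by
  refine Finset.sum_eq_zero fun w _ => ?_
  simp [outWeight, pow, Subsingleton.elim w.1 default]

lemma outDiv_prod_eq_sum_outWeightSnd (T₁ : HypothesisPair A₁ B₁) (T₂ : HypothesisPair A₂ B₂)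
    (g h : A₁ × A₂ → ℝ) :
    (T₁.prod T₂).outDiv g h
      = ∑ b₂, T₁.outDiv (outWeightSnd T₂.null g b₂) (outWeightSnd T₂.alt h b₂) := by
  simp only [outDiv, klSum, prod, outWeight_jointProd_eq_outWeightSnd, Fintype.sum_prod_type_right]

lemma outDiv_prod_eq_sum_outWeightFst (T₁ : HypothesisPair A₁ B₁) (T₂ : HypothesisPair A₂ B₂)
    (g h : A₁ × A₂ → ℝ) :
    (T₁.prod T₂).outDiv g h
      = ∑ b₁, T₂.outDiv (outWeightFst T₁.null g b₁) (outWeightFst T₁.alt h b₁) := by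
  simp only [outDiv, klSum, prod, outWeight_jointProd_eq_outWeightFst, Fintype.sum_prod_type]

lemma outDiv_comap (e : A₁ ≃ A₂) (f : B₁ ≃ B₂) (T : HypothesisPair A₂ B₂) (g h : A₂ → ℝ) :
    (T.comap e f).outDiv (g ∘ e) (h ∘ e) = T.outDiv g h := by
  simp only [outDiv, klSum, comap, outWeight_comp_equiv]
  exact f.sum_comp fun b =>
    outWeight T.null g b * Real.log (outWeight T.null g b / outWeight T.alt h b)

end HypothesisPair

/-- A family of weights `g u = t P(u | ·)` of total mass `t`, representing an auxiliary variable,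
together with weights `h` dominating it that describe the auxiliary variable under the
alternative. -/
structure IsAuxFamily {ι A : Type*} [Fintype ι] (t : ℝ) (g h : ι → A → ℝ) : Prop where
  nonneg_left : ∀ u a, 0 ≤ g u a
  nonneg_right : ∀ u a, 0 ≤ h u a
  ac : ∀ u a, h u a = 0 → g u a = 0
  sum_eq : ∀ a, ∑ u, g u a = t

namespace IsAuxFamily

variable {ι κ A B A₁ A₂ B₁ B₂ : Type*} [Fintype ι] [Fintype κ] [Fintype B₁] [Fintype B₂]
  {t s : ℝ}

lemma reindex {g h : ι → A → ℝ} (H : IsAuxFamily t g h) (e : κ ≃ ι) :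
    IsAuxFamily t (g ∘ e) (h ∘ e) where
  nonneg_left _ := H.nonneg_left _
  nonneg_right _ := H.nonneg_right _
  ac _ := H.ac _
  sum_eq a := (e.sum_comp fun u => g u a).trans (H.sum_eq a)

lemma comp {g h : ι → A₂ → ℝ} (H : IsAuxFamily t g h) (f : A₁ → A₂) :
    IsAuxFamily t (fun u => g u ∘ f) (fun u => h u ∘ f) where
  nonneg_left _ _ := H.nonneg_left _ _
  nonneg_right _ _ := H.nonneg_right _ _
  ac _ _ := H.ac _ _
  sum_eq _ := H.sum_eq _

lemma smul {g h : ι → A → ℝ} (H : IsAuxFamily t g h) {c : ℝ} (hc : 0 ≤ c) :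
    IsAuxFamily (c * t) (fun u => c • g u) (fun u => c • h u) where
  nonneg_left u a := mul_nonneg hc (H.nonneg_left u a)
  nonneg_right u a := mul_nonneg hc (H.nonneg_right u a)
  ac u a hh := mul_eq_zero.2 ((mul_eq_zero.1 hh).imp id (H.ac u a))
  sum_eq a := by simp only [Pi.smul_apply, smul_eq_mul, ← Finset.mul_sum, H.sum_eq]

lemma sumElim {g h : ι → A → ℝ} {g' h' : κ → A → ℝ} (H : IsAuxFamily t g h)
    (H' : IsAuxFamily s g' h') : IsAuxFamily (t + s) (Sum.elim g g') (Sum.elim h h') where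
  nonneg_left := Sum.forall.2 ⟨H.nonneg_left, H'.nonneg_left⟩
  nonneg_right := Sum.forall.2 ⟨H.nonneg_right, H'.nonneg_right⟩
  ac := Sum.forall.2 ⟨H.ac, H'.ac⟩
  sum_eq a := by
    simp only [Fintype.sum_sum_type, Sum.elim_inl, Sum.elim_inr, H.sum_eq, H'.sum_eq]

protected lemma sum_outWeight [Fintype A] [Fintype B] {g h : ι → A → ℝ}
    (H : IsAuxFamily t g h) {p : A × B → ℝ} (hp : IsPMF p) :
    ∑ u : ι × B, outWeight p (g u.1) u.2 = t := by
  have hmass : ∑ a, margFst p a = 1 := (Fintype.sum_prod_type p).symm.trans hp.2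
  simp only [Fintype.sum_prod_type, sum_outWeight]
  rw [Finset.sum_comm]
  simp only [← Finset.sum_mul, H.sum_eq, ← Finset.mul_sum, hmass, mul_one]

protected lemma outWeightSnd [Fintype A₂] {g h : ι → A₁ × A₂ → ℝ} (H : IsAuxFamily t g h)
    (T : HypothesisPair A₂ B₂) :
    IsAuxFamily t (fun u : ι × B₂ => outWeightSnd T.null (g u.1) u.2)
      (fun u => outWeightSnd T.alt (h u.1) u.2) where
  nonneg_left _ _ := outWeight_nonneg T.null_nonneg (fun _ => H.nonneg_left _ _) _
  nonneg_right _ _ := outWeight_nonneg T.alt_nonneg (fun _ => H.nonneg_right _ _) _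
  ac _ _ := outWeight_eq_zero_of_ac T.alt_nonneg (fun _ => H.nonneg_right _ _) T.ac
    fun _ => H.ac _ _
  sum_eq a₁ := (H.comp fun a₂ => (a₁, a₂)).sum_outWeight T.isPMF_null

protected lemma outWeightFst [Fintype A₁] {g h : ι → A₁ × A₂ → ℝ} (H : IsAuxFamily t g h)
    (T : HypothesisPair A₁ B₁) :
    IsAuxFamily t (fun u : ι × B₁ => outWeightFst T.null (g u.1) u.2)
      (fun u => outWeightFst T.alt (h u.1) u.2) where
  nonneg_left _ _ := outWeight_nonneg T.null_nonneg (fun _ => H.nonneg_left _ _) _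
  nonneg_right _ _ := outWeight_nonneg T.alt_nonneg (fun _ => H.nonneg_right _ _) _
  ac _ _ := outWeight_eq_zero_of_ac T.alt_nonneg (fun _ => H.nonneg_right _ _) T.ac
    fun _ => H.ac _ _
  sum_eq a₂ := (H.comp fun a₁ => (a₁, a₂)).sum_outWeight T.isPMF_null

end IsAuxFamily

/-- Some auxiliary variable of total mass `t` costs at most `ρ` and `σ` in conditional mutual
information given the outputs of `T` and `S` respectively, and its divergence under `T` exceeds that
under `S` by `δ`. -/
def Achievable {A B C : Type*} [Fintype A] [Fintype B] [Fintype C] (T : HypothesisPair A B)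
    (S : HypothesisPair A C) (t ρ σ δ : ℝ) : Prop :=
  ∃ (N : ℕ) (g h : Fin N → A → ℝ), IsAuxFamily t g h ∧
    ∑ u, condMITerm T.null (g u) ≤ ρ ∧ ∑ u, condMITerm S.null (g u) ≤ σ ∧
    ∑ u, (T.outDiv (g u) (h u) - S.outDiv (g u) (h u)) = δ

section Achievable

variable {ι A B C : Type*} [Fintype ι] [Fintype A] [Fintype B] [Fintype C]
  {T : HypothesisPair A B} {S : HypothesisPair A C} {t s ρ σ δ ρ' σ' δ' : ℝ}

lemma IsAuxFamily.achievable {g h : ι → A → ℝ} (H : IsAuxFamily t g h)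
    (hρ : ∑ u, condMITerm T.null (g u) ≤ ρ) (hσ : ∑ u, condMITerm S.null (g u) ≤ σ)
    (hδ : ∑ u, (T.outDiv (g u) (h u) - S.outDiv (g u) (h u)) = δ) : Achievable T S t ρ σ δ := by
  let e := (Fintype.equivFin ι).symm
  refine ⟨_, g ∘ e, h ∘ e, H.reindex e, ?_, ?_, ?_⟩
  · exact (e.sum_comp fun u => condMITerm T.null (g u)).trans_le hρ
  · exact (e.sum_comp fun u => condMITerm S.null (g u)).trans_le hσ
  · exact (e.sum_comp fun u => T.outDiv (g u) (h u) - S.outDiv (g u) (h u)).trans hδ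

namespace Achievable

lemma mono (H : Achievable T S t ρ σ δ) (hρ : ρ ≤ ρ') (hσ : σ ≤ σ') : Achievable T S t ρ' σ' δ := by
  obtain ⟨N, g, h, hfam, hT, hS, hδ⟩ := H
  exact ⟨N, g, h, hfam, hT.trans hρ, hS.trans hσ, hδ⟩

lemma smul (H : Achievable T S t ρ σ δ) {c : ℝ} (hc : 0 ≤ c) :
    Achievable T S (c * t) (c * ρ) (c * σ) (c * δ) := by
  obtain ⟨N, g, h, hfam, hT, hS, rfl⟩ := H
  refine ⟨N, _, _, hfam.smul hc, ?_, ?_, ?_⟩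
  · simpa only [condMITerm_smul, ← Finset.mul_sum] using mul_le_mul_of_nonneg_left hT hc
  · simpa only [condMITerm_smul, ← Finset.mul_sum] using mul_le_mul_of_nonneg_left hS hc
  · simp only [HypothesisPair.outDiv_smul, Finset.mul_sum, mul_sub]

lemma add (H : Achievable T S t ρ σ δ) (H' : Achievable T S s ρ' σ' δ') :
    Achievable T S (t + s) (ρ + ρ') (σ + σ') (δ + δ') := by
  obtain ⟨N, g, h, hfam, hT, hS, rfl⟩ := H
  obtain ⟨N', g', h', hfam', hT', hS', rfl⟩ := H'
  apply (hfam.sumElim hfam').achievable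
  · simpa only [Fintype.sum_sum_type, Sum.elim_inl, Sum.elim_inr] using add_le_add hT hT'
  · simpa only [Fintype.sum_sum_type, Sum.elim_inl, Sum.elim_inr] using add_le_add hS hS'
  · simp only [Fintype.sum_sum_type, Sum.elim_inl, Sum.elim_inr]

lemma of_comap {A' B' C' : Type*} [Fintype A'] [Fintype B'] [Fintype C'] {e : A' ≃ A}
    {f : B' ≃ B} {f' : C' ≃ C} (H : Achievable (T.comap e f) (S.comap e f') t ρ σ δ) :
    Achievable T S t ρ σ δ := by
  obtain ⟨N, g, h, hfam, hT, hS, hδ⟩ := H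
  obtain ⟨g, rfl⟩ : ∃ g₀ : Fin N → A → ℝ, (fun u => g₀ u ∘ e) = g :=
    ⟨fun u => g u ∘ e.symm, by simp [Function.comp_assoc]⟩
  obtain ⟨h, rfl⟩ : ∃ h₀ : Fin N → A → ℝ, (fun u => h₀ u ∘ e) = h :=
    ⟨fun u => h u ∘ e.symm, by simp [Function.comp_assoc]⟩
  refine ⟨N, g, h, by simpa [Function.comp_assoc] using hfam.comp e.symm, ?_, ?_, ?_⟩
  · simpa only [HypothesisPair.comap, condMITerm_comp_equiv] using hT
  · simpa only [HypothesisPair.comap, condMITerm_comp_equiv] using hS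
  · simpa only [HypothesisPair.outDiv_comap] using hδ

/-- The auxiliary variable `U` splits into `(U, B₂)` for the first coordinate and `(U, C₁)` for the
second, so the difference of divergences telescopes through `S₁.prod T₂` (Csiszár's sum
identity). -/
lemma exists_of_prod {A₁ A₂ B₁ B₂ C₁ C₂ : Type*} [Fintype A₁] [Fintype A₂] [Fintype B₁]
    [Fintype B₂] [Fintype C₁] [Fintype C₂] {T₁ : HypothesisPair A₁ B₁} {T₂ : HypothesisPair A₂ B₂}
    {S₁ : HypothesisPair A₁ C₁} {S₂ : HypothesisPair A₂ C₂}
    (hmarg₁ : margFst T₁.null = margFst S₁.null) (hmarg₂ : margFst T₂.null = margFst S₂.null)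
    (H : Achievable (T₁.prod T₂) (S₁.prod S₂) t ρ σ δ) :
    ∃ ρ₁ ρ₂ σ₁ σ₂ δ₁ δ₂, Achievable T₁ S₁ t ρ₁ σ₁ δ₁ ∧ Achievable T₂ S₂ t ρ₂ σ₂ δ₂ ∧
      ρ₁ + ρ₂ ≤ ρ ∧ σ₁ + σ₂ ≤ σ ∧ δ₁ + δ₂ = δ := by
  obtain ⟨N, g, h, hfam, hT, hS, rfl⟩ := H
  refine ⟨_, _, _, _, _, _, (hfam.outWeightSnd T₂).achievable le_rfl le_rfl rfl,
    (hfam.outWeightFst S₁).achievable le_rfl le_rfl rfl, hT.trans' ?_, hS.trans' ?_, ?_⟩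
  · simp only [Fintype.sum_prod_type, ← Finset.sum_add_distrib]
    exact Finset.sum_le_sum fun u _ => sum_condMITerm_outWeight_le_of_fst T₁.null_nonneg
      T₂.null_nonneg S₁.null_nonneg hmarg₁ (hfam.nonneg_left u)
  · simp only [Fintype.sum_prod_type, ← Finset.sum_add_distrib]
    exact Finset.sum_le_sum fun u _ => sum_condMITerm_outWeight_le_of_snd S₁.null_nonneg
      S₂.null_nonneg T₂.null_nonneg hmarg₂.symm (hfam.nonneg_left u)
  · simp only [Fintype.sum_prod_type, Finset.sum_sub_distrib,
      ← HypothesisPair.outDiv_prod_eq_sum_outWeightSnd,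
      ← HypothesisPair.outDiv_prod_eq_sum_outWeightFst, sub_add_sub_cancel]

lemma of_pow (hmarg : margFst T.null = margFst S.null) (n : ℕ)
    (H : Achievable (T.pow n) (S.pow n) 1 ρ σ δ) : Achievable T S n ρ σ δ := by
  induction n generalizing ρ σ δ with
  | zero =>
    obtain ⟨N, g, h, -, hT, hS, rfl⟩ := H
    simp only [HypothesisPair.condMITerm_pow_zero, Finset.sum_const_zero] at hT hS
    refine ⟨0, fun _ => 0, fun _ => 0, ⟨nofun, nofun, nofun, by simp⟩, by simpa, by simpa, ?_⟩
    simp [HypothesisPair.outDiv_pow_zero T S]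
  | succ n ih =>
    have hmarg_pow : margFst (T.pow n).null = margFst (S.pow n).null := by
      ext a
      simp only [HypothesisPair.margFst_pow, hmarg]
    rw [HypothesisPair.pow_succ, HypothesisPair.pow_succ] at H
    obtain ⟨ρ₁, ρ₂, σ₁, σ₂, δ₁, δ₂, H₁, H₂, hρ, hσ, rfl⟩ :=
      H.of_comap.exists_of_prod hmarg hmarg_pow
    rw [Nat.cast_succ, add_comm (n : ℝ)]
    exact (H₁.add (ih H₂)).mono hρ hσ

end Achievable

end Achievable

section CondMI

variable {Ω ι A B : Type*} [Fintype Ω] [Fintype ι] [Fintype A] [Fintype B]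

lemma entropy_pushf (p : Ω → ℝ) (f : Ω → A) :
    entropy (pushf p f) = -∑ ω, p ω * Real.log (pushf p f (f ω)) := by
  classical
  have hterm (a : A) : pushf p f a * Real.log (pushf p f a)
      = ∑ ω, if f ω = a then p ω * Real.log (pushf p f (f ω)) else 0 := by
    nth_rw 1 [pushf]
    rw [Finset.sum_mul]
    refine Finset.sum_congr rfl fun ω _ => ?_
    split_ifs with h
    · rw [h]
    · rw [zero_mul]
  simp only [entropy, hterm]
  rw [Finset.sum_comm]
  simp only [Finset.sum_ite_eq, Finset.mem_univ, if_true]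

/-- The joint mass function of `(U, (A, B))` when `g u = P(u | ·)` and `p` is that of `(A, B)`. -/
def auxJoint (p : A × B → ℝ) (g : ι → A → ℝ) : ι × A × B → ℝ := fun w => g w.1 w.2.1 * p w.2

lemma pushf_auxJoint_fst_snd (p : A × B → ℝ) (g : ι → A → ℝ) (u : ι) (b : B) :
    pushf (auxJoint p g) (fun w => (w.1, w.2.2)) (u, b) = outWeight p (g u) b := by
  classical
  simp [pushf, auxJoint, outWeight, Fintype.sum_prod_type, ite_and, mul_comm]

lemma pushf_auxJoint_id (p : A × B → ℝ) (g : ι → A → ℝ) (w : ι × A × B) :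
    pushf (auxJoint p g) (fun w => (w.1, w.2.1, w.2.2)) w = auxJoint p g w := by
  classical
  simp [pushf]

lemma pushf_auxJoint_snd (p : A × B → ℝ) {g : ι → A → ℝ} (hg : ∀ a, ∑ u, g u a = 1)
    (w : A × B) : pushf (auxJoint p g) (fun w => (w.2.1, w.2.2)) w = p w := by
  classical
  simp [pushf, auxJoint, Fintype.sum_prod_type, ← Finset.sum_mul, hg]

lemma pushf_auxJoint_snd_snd (p : A × B → ℝ) {g : ι → A → ℝ} (hg : ∀ a, ∑ u, g u a = 1)
    (b : B) : pushf (auxJoint p g) (fun w => w.2.2) b = outWeight p 1 b := by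
  classical
  simp only [pushf, auxJoint, Fintype.sum_prod_type]
  rw [Finset.sum_comm]
  simp [outWeight, ← Finset.sum_mul, hg]

lemma condMI_auxJoint {p : A × B → ℝ} (hp : ∀ w, 0 ≤ p w) {g : ι → A → ℝ}
    (hg : ∀ u a, 0 ≤ g u a) (hsum : ∀ a, ∑ u, g u a = 1) :
    condMI (auxJoint p g) (fun w => w.1) (fun w => w.2.1) (fun w => w.2.2)
      = ∑ u, condMITerm p (g u) := by
  simp only [condMI, entropy_pushf, pushf_auxJoint_fst_snd, pushf_auxJoint_snd _ hsum,
    pushf_auxJoint_id, pushf_auxJoint_snd_snd _ hsum, condMITerm]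
  rw [← Fintype.sum_prod_type', sub_neg_eq_add, sub_neg_eq_add, ← Finset.sum_neg_distrib,
    ← Finset.sum_neg_distrib, ← Finset.sum_add_distrib, ← Finset.sum_add_distrib,
    ← Finset.sum_add_distrib]
  refine Finset.sum_congr rfl fun ⟨u, a, b⟩ _ => ?_
  rcases eq_or_ne (g u a * p (a, b)) 0 with h | h
  · simp [auxJoint, h, mul_comm (p _)]
  obtain ⟨hga, hpa⟩ := mul_ne_zero_iff.1 h
  have hone := (outWeight_one_pos hp hpa).ne'
  have hout := (outWeight_pos hp (hg u) hpa hga).ne'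
  simp only [auxJoint]
  rw [Real.log_div hga (div_ne_zero hout hone), Real.log_div hout hone, Real.log_mul hga hpa]
  ring

end CondMI

lemma outDist_condSnd {A B : Type*} [Fintype A] [Fintype B] {p : A × B → ℝ}
    (hp : ∀ w, 0 ≤ p w) (g : A → ℝ) (c : ℝ) :
    outDist (condSnd p) (fun a => g a * margFst p a / c) = c⁻¹ • outWeight p g := by
  ext b
  simp only [outDist, condSnd, outWeight, Pi.smul_apply, smul_eq_mul, Finset.mul_sum]
  refine Finset.sum_congr rfl fun a _ => ?_
  rcases eq_or_ne (margFst p a) 0 with ha | ha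
  · simp [eq_zero_of_margFst_eq_zero hp ha]
  · field_simp

namespace HypothesisPair

variable {A B C : Type*} [Fintype A] [Fintype B] [Fintype C] {g h : A → ℝ}

lemma klDiv_outDist (T : HypothesisPair A B) (hh : ∀ a, 0 ≤ h a) (hgh : ∀ a, h a = 0 → g a = 0)
    {c d : ℝ} (hc : c ≠ 0) (hd : d ≠ 0) :
    klDiv (outDist (condSnd T.null) fun a => g a * margFst T.null a / c)
        (outDist (condSnd T.alt) fun a => h a * margFst T.alt a / d)
      = ((c⁻¹ * (T.outDiv g h + (∑ a, g a * margFst T.null a) * Real.log (c⁻¹ / d⁻¹)) : ℝ) :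
          EReal) := by
  have hac (b : B) : outWeight T.alt h b = 0 → outWeight T.null g b = 0 :=
    outWeight_eq_zero_of_ac T.alt_nonneg hh T.ac hgh
  rw [outDist_condSnd T.null_nonneg, outDist_condSnd T.alt_nonneg, klDiv_eq_klSum,
    klSum_smul_smul hac (inv_ne_zero hc) (inv_ne_zero hd), sum_outWeight, outDiv]
  intro b hb
  exact mul_eq_zero.2 (.inr (hac b ((mul_eq_zero.1 hb).resolve_left (inv_ne_zero hd))))

lemma outDiv_eq_zero_of_sum_eq_zero (T : HypothesisPair A B) (hg : ∀ a, 0 ≤ g a)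
    (hmass : ∑ a, g a * margFst T.null a = 0) (h : A → ℝ) : T.outDiv g h = 0 := by
  rw [← sum_outWeight,
    Fintype.sum_eq_zero_iff_of_nonneg (outWeight_nonneg T.null_nonneg hg)] at hmass
  simp [outDiv, klSum, hmass]

lemma sum_mul_margFst_alt_ne_zero (T : HypothesisPair A B) (hh : ∀ a, 0 ≤ h a)
    (hgh : ∀ a, h a = 0 → g a = 0) (hmass : ∑ a, g a * margFst T.null a ≠ 0) :
    ∑ a, h a * margFst T.alt a ≠ 0 := by
  contrapose! hmass
  rw [← sum_outWeight] at hmass ⊢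
  rw [Fintype.sum_eq_zero_iff_of_nonneg (outWeight_nonneg T.alt_nonneg hh)] at hmass
  exact Finset.sum_eq_zero fun b _ =>
    outWeight_eq_zero_of_ac T.alt_nonneg hh T.ac hgh (congrFun hmass b)

lemma outDiv_sub_outDiv_le_mul_fdiff {T : HypothesisPair A B} {S : HypothesisPair A C}
    (hnull : margFst T.null = margFst S.null) (halt : margFst T.alt = margFst S.alt)
    (hg : ∀ a, 0 ≤ g a) (hh : ∀ a, 0 ≤ h a) (hgh : ∀ a, h a = 0 → g a = 0) :
    ((T.outDiv g h - S.outDiv g h : ℝ) : EReal)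
      ≤ ((∑ a, g a * margFst T.null a : ℝ) : EReal)
        * fdiff (condSnd T.null) (condSnd S.null) (condSnd T.alt) (condSnd S.alt) (margFst T.alt)
          (fun a => g a * margFst T.null a / ∑ a', g a' * margFst T.null a') := by
  have hmargq (a : A) : 0 ≤ h a * margFst T.alt a :=
    mul_nonneg (hh a) (margFst_nonneg T.alt_nonneg a)
  have hmass : 0 ≤ ∑ a, g a * margFst T.null a :=
    Finset.sum_nonneg fun a _ => mul_nonneg (hg a) (margFst_nonneg T.null_nonneg a)
  rcases eq_or_ne (∑ a, g a * margFst T.null a) 0 with hc | hc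
  · rw [T.outDiv_eq_zero_of_sum_eq_zero hg hc, S.outDiv_eq_zero_of_sum_eq_zero hg (hnull ▸ hc), hc]
    simp
  have hd := T.sum_mul_margFst_alt_ne_zero hh hgh hc
  have hT := T.klDiv_outDist hh hgh hc hd
  have hS := S.klDiv_outDist hh hgh hc hd
  rw [← hnull, ← halt] at hS
  have hle : (((∑ a, g a * margFst T.null a)⁻¹ * (T.outDiv g h - S.outDiv g h) : ℝ) : EReal)
      ≤ fdiff (condSnd T.null) (condSnd S.null) (condSnd T.alt) (condSnd S.alt) (margFst T.alt)
          (fun a => g a * margFst T.null a / ∑ a', g a' * margFst T.null a') := by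
    refine le_sSup ⟨fun a => h a * margFst T.alt a / ∑ a', h a' * margFst T.alt a', ⟨?_, ?_⟩,
      fun a ha => by simp [ha], ?_⟩
    · exact fun a => div_nonneg (hmargq a) (Finset.sum_nonneg fun a _ => hmargq a)
    · rw [← Finset.sum_div, div_self hd]
    · rw [hT, hS, ← EReal.coe_sub, ← mul_sub, add_sub_add_right_eq_sub]
  calc ((T.outDiv g h - S.outDiv g h : ℝ) : EReal)
      = ((∑ a, g a * margFst T.null a : ℝ) : EReal)
          * (((∑ a, g a * margFst T.null a)⁻¹ * (T.outDiv g h - S.outDiv g h) : ℝ) : EReal) := by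
        rw [← EReal.coe_mul, mul_inv_cancel_left₀ hc]
    _ ≤ _ := mul_le_mul_of_nonneg_left hle (EReal.coe_nonneg.2 hmass)

end HypothesisPair

lemma Achievable.le_Gexp {A B C : Type*} [Fintype A] [Fintype B] [Fintype C]
    {T : HypothesisPair A B} {S : HypothesisPair A C} {R δ : ℝ}
    (hnull : margFst T.null = margFst S.null) (halt : margFst T.alt = margFst S.alt)
    (H : Achievable T S 1 R R δ) : (δ : EReal) ≤ Gexp T.null T.alt S.null S.alt R := by
  obtain ⟨N, g, h, hfam, hT, hS, rfl⟩ := H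
  rw [← condMI_auxJoint T.null_nonneg hfam.nonneg_left hfam.sum_eq] at hT
  rw [← condMI_auxJoint S.null_nonneg hfam.nonneg_left hfam.sum_eq] at hS
  refine le_sSup_of_le ⟨N, fun a u => g u a, fun a => ⟨(hfam.nonneg_left · a), hfam.sum_eq a⟩,
    hT, hS, rfl⟩ ?_
  let coeHom : ℝ →+ EReal := ⟨⟨(↑), EReal.coe_zero⟩, EReal.coe_add⟩
  refine (map_sum coeHom _ _).trans_le (Finset.sum_le_sum fun u _ => ?_)
  exact HypothesisPair.outDiv_sub_outDiv_le_mul_fdiff hnull halt (hfam.nonneg_left u)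
    (hfam.nonneg_right u) (hfam.ac u)

lemma log_two_pow_floor_le {x : ℝ} (hx : 0 ≤ x) : Real.log ((2 ^ ⌊x⌋₊ : ℕ) : ℝ) ≤ x := by
  rw [Nat.cast_pow, Real.log_pow, Nat.cast_ofNat]
  calc ⌊x⌋₊ * Real.log 2 ≤ ⌊x⌋₊ * 1 :=
        mul_le_mul_of_nonneg_left (by linarith [Real.log_two_lt_d9]) (Nat.cast_nonneg _)
    _ ≤ x := (mul_one _).trans_le (Nat.floor_le hx)

namespace HypothesisPair

variable {A B C : Type*} [Fintype A] [Fintype B] [Fintype C] {n N : ℕ}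

/-- The normalised divergence `(1/n) D(P_{MBⁿ}‖Q_{MBⁿ})` achieved by the encoder `κ = P_{M|Aⁿ}`. -/
def exponent (T : HypothesisPair A B) (κ : (Fin n → A) → Fin N → ℝ) : ℝ :=
  (n : ℝ)⁻¹ * ∑ m, (T.pow n).outDiv (κ · m) (κ · m)

lemma coe_exponent (T : HypothesisPair A B) {κ : (Fin n → A) → Fin N → ℝ}
    (hκ : ∀ a, IsPMF (κ a)) :
    (T.exponent κ : EReal) = ((n : ℝ)⁻¹ : ℝ)
      * klDiv (fun w : Fin N × (Fin n → B) => ∑ a, (∏ i, T.null (a i, w.2 i)) * κ a w.1)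
          (fun w => ∑ a, (∏ i, T.alt (a i, w.2 i)) * κ a w.1) := by
  rw [klDiv_eq_klSum, klSum, Fintype.sum_prod_type, ← EReal.coe_mul]
  · rfl
  · exact fun w => outWeight_eq_zero_of_ac (T.pow n).alt_nonneg (fun a => (hκ a).1 w.1) (T.pow n).ac
      fun _ h => h

lemma errExp_le_iff (T : HypothesisPair A B) {R : ℝ} {v : EReal} :
    errExp T.null T.alt R ≤ v ↔ ∀ n, 0 < n → ∀ κ : (Fin n → A) → Fin (2 ^ ⌊(n : ℝ) * R⌋₊) → ℝ,
      (∀ a, IsPMF (κ a)) → (T.exponent κ : EReal) ≤ v := by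
  refine sSup_le_iff.trans ⟨fun H n hn κ hκ => H _ ⟨n, hn, κ, hκ, T.coe_exponent hκ⟩, ?_⟩
  rintro H _ ⟨n, hn, κ, hκ, rfl⟩
  exact (T.coe_exponent hκ).ge.trans (H n hn κ hκ)

lemma sum_condMITerm_encoder_le (T : HypothesisPair A B) {R : ℝ} (hR : 0 ≤ R)
    {κ : A → Fin (2 ^ ⌊R⌋₊) → ℝ} (hκ : ∀ a, IsPMF (κ a)) :
    ∑ m, condMITerm T.null (κ · m) ≤ R := by
  have hsum : ∑ m, (κ · m) = 1 := by
    ext a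
    exact (Finset.sum_apply _ _ _).trans (hκ a).2
  calc ∑ m, condMITerm T.null (κ · m)
      ≤ Real.log (Fintype.card (Fin (2 ^ ⌊R⌋₊))) :=
        sum_condMITerm_le_log_card T.isPMF_null (fun m a => (hκ a).1 m) hsum
    _ ≤ R := by
        rw [Fintype.card_fin]
        exact log_two_pow_floor_le hR

lemma exponent_le_Gexp_add {T : HypothesisPair A B} {S : HypothesisPair A C}
    (hnull : margFst T.null = margFst S.null) (halt : margFst T.alt = margFst S.alt) {R : ℝ}
    (hR : 0 ≤ R) (hn : 0 < n) {κ : (Fin n → A) → Fin (2 ^ ⌊(n : ℝ) * R⌋₊) → ℝ}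
    (hκ : ∀ a, IsPMF (κ a)) :
    (T.exponent κ : EReal) ≤ Gexp T.null T.alt S.null S.alt R + (S.exponent κ : EReal) := by
  have hn' : (n : ℝ) ≠ 0 := Nat.cast_ne_zero.2 hn.ne'
  have hnR : 0 ≤ n * R := by positivity
  have hfam : IsAuxFamily 1 (fun m a => κ a m) (fun m a => κ a m) :=
    ⟨fun m a => (hκ a).1 m, fun m a => (hκ a).1 m, fun _ _ => id, fun a => (hκ a).2⟩
  have hpow : Achievable (T.pow n) (S.pow n) 1 (n * R) (n * R) _ :=
    hfam.achievable ((T.pow n).sum_condMITerm_encoder_le hnR hκ)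
      ((S.pow n).sum_condMITerm_encoder_le hnR hκ) rfl
  have hach := (hpow.of_pow hnull n).smul (c := (n : ℝ)⁻¹) (by positivity)
  rw [inv_mul_cancel_left₀ hn', inv_mul_cancel₀ hn', Finset.sum_sub_distrib, mul_sub] at hach
  rw [← EReal.sub_le_iff_le_add (by simp) (by simp), ← EReal.coe_sub]
  exact hach.le_Gexp hnull halt

end HypothesisPair

lemma le_sum_add_of_chain {k : ℕ} {a : Fin (k + 1) → EReal} {G : Fin k → EReal}
    (h : ∀ j : Fin k, a j.castSucc ≤ G j + a j.succ) : a 0 ≤ ∑ j, G j + a (Fin.last k) := by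
  induction k with
  | zero => simp
  | succ k ih =>
    calc a 0 ≤ ∑ j : Fin k, G j.castSucc + a (Fin.last k).castSucc :=
          ih (a := fun j => a j.castSucc) fun j => h j.castSucc
      _ ≤ ∑ j : Fin k, G j.castSucc + (G (Fin.last k) + a (Fin.last (k + 1))) :=
          add_le_add_right (h (Fin.last k)) _
      _ = ∑ j, G j + a (Fin.last (k + 1)) := by rw [Fin.sum_univ_castSucc, add_assoc]

/-- Chain of auxiliary receivers `Z_0, …, Z_k` (so `k+1 ≥ 1` receivers):
`E_{P_XY,Q_XY}(R) ≤ G_{P_XY,Q_XY,P_XZ₀,Q_XZ₀}(R)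
  + ∑_j G_{P_XZ_j,Q_XZ_j,P_XZ_{j+1},Q_XZ_{j+1}}(R) + E_{P_XZ_k,Q_XZ_k}(R)`. -/
theorem chain_of_aux_receivers {X Y : Type*} [Fintype X] [Fintype Y]
    (k : ℕ) (Z : Fin (k + 1) → Type*) [∀ j, Fintype (Z j)]
    (R : ℝ) (hR : 0 < R)
    (pXY qXY : X × Y → ℝ) (hpXY : IsPMF pXY) (hqXY : IsPMF qXY)
    (pXZ qXZ : (j : Fin (k + 1)) → X × Z j → ℝ)
    (hpXZ : ∀ j, IsPMF (pXZ j)) (hqXZ : ∀ j, IsPMF (qXZ j))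
    (hmargP : ∀ j, margFst (pXZ j) = margFst pXY)
    (hmargQ : ∀ j, margFst (qXZ j) = margFst qXY)
    (hfinY : klDiv pXY qXY < ⊤)
    (hfinZ : ∀ j, klDiv (pXZ j) (qXZ j) < ⊤) :
    errExp pXY qXY R
      ≤ Gexp pXY qXY (pXZ 0) (qXZ 0) R
        + ∑ j : Fin k,
            Gexp (pXZ j.castSucc) (qXZ j.castSucc) (pXZ j.succ) (qXZ j.succ) R
        + errExp (pXZ (Fin.last k)) (qXZ (Fin.last k)) R := by
  let T : HypothesisPair X Y := ⟨pXY, qXY, hpXY, hqXY.1, eq_zero_of_klDiv_lt_top hfinY⟩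
  let S (j : Fin (k + 1)) : HypothesisPair X (Z j) :=
    ⟨pXZ j, qXZ j, hpXZ j, (hqXZ j).1, eq_zero_of_klDiv_lt_top (hfinZ j)⟩
  refine T.errExp_le_iff.2 fun n hn κ hκ => ?_
  have hfirst := HypothesisPair.exponent_le_Gexp_add (T := T) (S := S 0) (hmargP 0).symm
    (hmargQ 0).symm hR.le hn hκ
  have hchain := le_sum_add_of_chain (a := fun j => ((S j).exponent κ : EReal)) fun j =>
    HypothesisPair.exponent_le_Gexp_add (T := S j.castSucc) (S := S j.succ)
      ((hmargP _).trans (hmargP _).symm) ((hmargQ _).trans (hmargQ _).symm) hR.le hn hκ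
  have hlast := (S (Fin.last k)).errExp_le_iff.1 le_rfl n hn κ hκ
  rw [add_assoc]
  exact hfirst.trans (add_le_add_right (hchain.trans (add_le_add_right hlast _)) _)

end
end

section
/- Let 𝒳, 𝒴, 𝒵, 𝒥 be finite sets, R > 0, and let P_{XYZJ}, Q_{XYZJ} be pmfs with D(P_{XYJ}‖Q_{XYJ}) < ∞ and D(P_{XZJ}‖Q_{XZJ}) < ∞. Set Y' = (Y, J) and Z' = (Z, J). Then E_{P_{XY},Q_{XY}}(R) ≤ G_{P_{XY'},Q_{XY'},P_{XZ'},Q_{XZ'}}(R) + E_{P_{XZ'},Q_{XZ'}}(R). -/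
open scoped BigOperators

noncomputable section

/-!
Given an encoder `M` of `X^n`, let the receiver's block interpolate from `Z^n` to `Y^n` one letter
at a time. The difference `D(P_{MY^n}‖Q_{MY^n}) - D(P_{MZ^n}‖Q_{MZ^n})` telescopes, and its `i`-th
term is the single-letter difference for the auxiliary `U_i = (M, Y_j : j < i, Z_j : j > i)`.
Disclosing also `X_j` for `j > i` can only increase `I(U_i; X_i | Y_i)`, which then becomes the
increment at `i` of a conditional entropy of `M`, so that `∑ I(U_i; X_i | Y_i) ≤ log |M| ≤ n R`;
symmetrically for `Z`. Adjoining a uniform time index to `U_i` yields one channel that is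
admissible in `G`. Finally `E_{XY} ≤ E_{XY'}`, as forgetting `J` is data processing.
-/

section Pushforward

variable {Ω α β γ : Type*} [Fintype Ω]

lemma pushf_apply [DecidableEq α] (p : Ω → ℝ) (f : Ω → α) (a : α) :
    pushf p f a = ∑ ω with f ω = a, p ω := by
  rw [Finset.sum_filter, pushf]
  congr!

lemma pushf_nonneg {p : Ω → ℝ} (hp : ∀ ω, 0 ≤ p ω) (f : Ω → α) (a : α) : 0 ≤ pushf p f a := by
  classical
  exact pushf_apply p f a ▸ Finset.sum_nonneg fun ω _ => hp ω

lemma le_pushf_apply {p : Ω → ℝ} (hp : ∀ ω, 0 ≤ p ω) (f : Ω → α) (ω : Ω) :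
    p ω ≤ pushf p f (f ω) := by
  classical
  rw [pushf_apply]
  exact Finset.single_le_sum (fun ω' _ => hp ω') (by simp)

lemma pushf_apply_of_injective {f : Ω → α} (hf : Function.Injective f) (p : Ω → ℝ) (ω : Ω) :
    pushf p f (f ω) = p ω := by
  classical
  simp [pushf_apply, Finset.sum_filter, hf.eq_iff]

lemma pushf_id (p : Ω → ℝ) : pushf p id = p :=
  funext (pushf_apply_of_injective Function.injective_id p)

lemma sum_pushf_mul [Fintype α] (p : Ω → ℝ) (f : Ω → α) (g : α → ℝ) :
    ∑ a, pushf p f a * g a = ∑ ω, p ω * g (f ω) := by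
  classical
  simp only [pushf_apply, Finset.sum_mul]
  rw [← Finset.sum_fiberwise _ f]
  refine Finset.sum_congr rfl fun a _ => Finset.sum_congr rfl fun ω hω => ?_
  rw [(Finset.mem_filter.1 hω).2]

lemma sum_pushf [Fintype α] (p : Ω → ℝ) (f : Ω → α) : ∑ a, pushf p f a = ∑ ω, p ω := by
  simpa using sum_pushf_mul p f 1

lemma IsPMF.pushf [Fintype α] {p : Ω → ℝ} (hp : IsPMF p) (f : Ω → α) : IsPMF (pushf p f) :=
  ⟨pushf_nonneg hp.1 f, (sum_pushf p f).trans hp.2⟩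

lemma pushf_pushf [Fintype α] (p : Ω → ℝ) (f : Ω → α) (g : α → β) :
    pushf (pushf p f) g = pushf p (g ∘ f) := by
  classical
  funext b
  simpa [pushf_apply, Finset.sum_filter] using
    sum_pushf_mul p f fun a => if g a = b then 1 else 0

lemma pushf_snd_apply [Fintype α] [Fintype β] (p : α × β → ℝ) (b : β) :
    pushf p Prod.snd b = ∑ a, p (a, b) := by
  classical
  simp [pushf_apply, Finset.sum_filter, Fintype.sum_prod_type]

lemma pushf_fst [Fintype α] [Fintype β] (p : α × β → ℝ) : pushf p Prod.fst = margFst p := by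
  classical
  funext a
  rw [pushf_apply, Finset.sum_filter, Fintype.sum_prod_type_right]
  simp [margFst]

lemma margFst_pushf [Fintype α] [Fintype β] [Fintype γ] (p : α × β → ℝ) {f : α × β → α × γ}
    (hf : ∀ s, (f s).1 = s.1) : margFst (pushf p f) = margFst p := by
  rw [← pushf_fst, pushf_pushf, ← pushf_fst]
  exact congrArg (pushf p) (funext hf)

lemma pushf_map_id_apply [Fintype α] [Fintype β] [DecidableEq γ] (p : α × β → ℝ) (f : β → γ)
    (a : α) (c : γ) : pushf p (Prod.map id f) (a, c) = ∑ b with f b = c, p (a, b) := by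
  classical
  rw [pushf_apply, Finset.sum_filter, Finset.sum_filter, Fintype.sum_prod_type_right]
  simp [Prod.ext_iff, ite_and]

lemma pushf_map_left_apply [Fintype α] [Fintype β] (p : α × β → ℝ) (f : α → γ) (c : γ) (b : β) :
    pushf p (Prod.map f id) (c, b) = pushf (fun a => p (a, b)) f c := by
  classical
  simp only [pushf_apply, Finset.sum_filter, Fintype.sum_prod_type]
  simp [Prod.ext_iff, ite_and]

end Pushforward

section RelativeEntropy

variable {α β : Type*} [Fintype α]

/-- Absolute continuity `p ≪ q` of mass functions. -/
def AbsCont {α : Type*} (p q : α → ℝ) : Prop := ∀ a, q a = 0 → p a = 0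

/-- The real-valued relative entropy of mass functions. It is the value of `klDiv p q` when
`p ≪ q` and meaningless otherwise. -/
def relEntropy (p q : α → ℝ) : ℝ := ∑ a, p a * Real.log (p a / q a)

lemma klDiv_of_absCont {p q : α → ℝ} (hpq : AbsCont p q) :
    klDiv p q = (relEntropy p q : EReal) := if_pos hpq

lemma absCont_of_klDiv_lt_top {p q : α → ℝ} (h : klDiv p q < ⊤) : AbsCont p q := by
  by_contra hpq
  exact h.ne (if_neg hpq)

lemma AbsCont.pushf {p q : α → ℝ} (hpq : AbsCont p q) (hq : ∀ a, 0 ≤ q a) (f : α → β) :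
    AbsCont (pushf p f) (pushf q f) := by
  classical
  intro b hb
  rw [pushf_apply, Finset.sum_eq_zero_iff_of_nonneg fun a _ => hq a] at hb
  rw [pushf_apply]
  exact Finset.sum_eq_zero fun a ha => hpq a (hb a ha)

lemma AbsCont.sum_pos {ι : Type*} {s : Finset ι} {p q : ι → ℝ} (hpq : AbsCont p q)
    (hq : ∀ i, 0 ≤ q i) (hp : 0 < ∑ i ∈ s, p i) : 0 < ∑ i ∈ s, q i := by
  refine (Finset.sum_nonneg fun i _ => hq i).lt_of_ne' fun h => hp.ne' ?_
  have hq0 := (Finset.sum_eq_zero_iff_of_nonneg fun i _ => hq i).1 h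
  exact Finset.sum_eq_zero fun i hi => hpq i (hq0 i hi)

/-- The tangent-line bound for `t ↦ a log t` at `t = a / b`. -/
lemma mul_log_le_add_sub {a b t : ℝ} (ha : 0 ≤ a) (hb : 0 ≤ b) (hab : b = 0 → a = 0)
    (ht : 0 < t) : a * Real.log t ≤ a * Real.log (a / b) + (t * b - a) := by
  rcases ha.eq_or_lt with rfl | ha
  · simpa using mul_nonneg ht.le hb
  have hb' : 0 < b := hb.lt_of_ne' fun h => ha.ne' (hab h)
  have hlog : Real.log t - Real.log (a / b) ≤ t / (a / b) - 1 := by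
    rw [← Real.log_div ht.ne' (by positivity)]
    exact Real.log_le_sub_one_of_pos (by positivity)
  calc a * Real.log t
      = a * Real.log (a / b) + a * (Real.log t - Real.log (a / b)) := by ring
    _ ≤ a * Real.log (a / b) + a * (t / (a / b) - 1) := by gcongr
    _ = a * Real.log (a / b) + (t * b - a) := by field_simp

lemma log_sum_inequality {ι : Type*} (s : Finset ι) {a b : ι → ℝ} (ha : ∀ i, 0 ≤ a i)
    (hb : ∀ i, 0 ≤ b i) (hab : AbsCont a b) :
    (∑ i ∈ s, a i) * Real.log ((∑ i ∈ s, a i) / ∑ i ∈ s, b i) ≤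
      ∑ i ∈ s, a i * Real.log (a i / b i) := by
  rcases (Finset.sum_nonneg fun i _ => ha i : 0 ≤ ∑ i ∈ s, a i).eq_or_lt with hA | hA
  · have ha0 := (Finset.sum_eq_zero_iff_of_nonneg fun i _ => ha i).1 hA.symm
    rw [← hA, zero_mul, Finset.sum_eq_zero fun i hi => by rw [ha0 i hi, zero_mul]]
  have hB := hab.sum_pos hb hA
  set t := (∑ i ∈ s, a i) / ∑ i ∈ s, b i
  have htB : t * ∑ i ∈ s, b i = ∑ i ∈ s, a i := div_mul_cancel₀ _ hB.ne'
  calc (∑ i ∈ s, a i) * Real.log t = ∑ i ∈ s, a i * Real.log t := Finset.sum_mul ..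
    _ ≤ ∑ i ∈ s, (a i * Real.log (a i / b i) + (t * b i - a i)) :=
        Finset.sum_le_sum fun i _ => mul_log_le_add_sub (ha i) (hb i) (hab i) (div_pos hA hB)
    _ = ∑ i ∈ s, a i * Real.log (a i / b i) := by
        rw [Finset.sum_add_distrib, Finset.sum_sub_distrib, ← Finset.mul_sum, htB, sub_self,
          add_zero]

variable [Fintype β]

lemma relEntropy_pushf_le {p q : α → ℝ} (hp : ∀ a, 0 ≤ p a) (hq : ∀ a, 0 ≤ q a)
    (hpq : AbsCont p q) (f : α → β) : relEntropy (pushf p f) (pushf q f) ≤ relEntropy p q := by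
  classical
  simp only [relEntropy, pushf_apply]
  rw [← Finset.sum_fiberwise _ f]
  exact Finset.sum_le_sum fun b _ => log_sum_inequality _ hp hq hpq

lemma relEntropy_pushf_of_injective {f : α → β} (hf : Function.Injective f) (p q : α → ℝ) :
    relEntropy (pushf p f) (pushf q f) = relEntropy p q := by
  simp only [relEntropy, sum_pushf_mul, pushf_apply_of_injective hf]

lemma klDiv_pushf_le {p q : α → ℝ} (hp : ∀ a, 0 ≤ p a) (hq : ∀ a, 0 ≤ q a) (f : α → β) :
    klDiv (pushf p f) (pushf q f) ≤ klDiv p q := by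
  by_cases hpq : AbsCont p q
  · rw [klDiv_of_absCont hpq, klDiv_of_absCont (hpq.pushf hq f)]
    exact EReal.coe_le_coe_iff.2 (relEntropy_pushf_le hp hq hpq f)
  · exact le_top.trans_eq (if_neg hpq).symm

lemma relEntropy_comp_equiv (e : β ≃ α) (p q : α → ℝ) :
    relEntropy (p ∘ e) (q ∘ e) = relEntropy p q :=
  e.sum_comp fun a => p a * Real.log (p a / q a)

lemma relEntropy_smul (c : ℝ) (p q : α → ℝ) :
    relEntropy (c • p) (c • q) = c * relEntropy p q := by
  rcases eq_or_ne c 0 with rfl | hc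
  · simp [relEntropy]
  · simp only [relEntropy, Finset.mul_sum, Pi.smul_apply, smul_eq_mul, mul_div_mul_left _ _ hc,
      mul_assoc]

lemma AbsCont.smul {ι : Type*} {p q : ι → ℝ} (hpq : AbsCont p q) (c : ℝ) {d : ℝ} (hd : d ≠ 0) :
    AbsCont (c • p) (d • q) := fun i hi => by
  rw [Pi.smul_apply, hpq i ((mul_eq_zero.1 hi).resolve_left hd), smul_zero]

lemma relEntropy_smul_smul {p q : α → ℝ} (hpq : AbsCont p q) {c d : ℝ} (hc : c ≠ 0)
    (hd : d ≠ 0) :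
    relEntropy (c • p) (d • q) = c * (relEntropy p q + Real.log (c / d) * ∑ a, p a) := by
  have hterm (a : α) : c * p a * Real.log (c * p a / (d * q a)) =
      c * (p a * Real.log (p a / q a) + Real.log (c / d) * p a) := by
    by_cases hp : p a = 0
    · simp [hp]
    have hq : q a ≠ 0 := fun h => hp (hpq a h)
    rw [mul_div_mul_comm, Real.log_mul (div_ne_zero hc hd) (div_ne_zero hp hq)]
    ring
  simp only [relEntropy, Pi.smul_apply, smul_eq_mul, hterm, Finset.mul_sum,
    ← Finset.sum_add_distrib]

lemma relEntropy_prod (p q : α × β → ℝ) :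
    relEntropy p q = ∑ a, relEntropy (fun b => p (a, b)) fun b => q (a, b) :=
  Fintype.sum_prod_type _

end RelativeEntropy

section Entropy

variable {α β M W : Type*} [Fintype α] [Fintype β] [Fintype M] [Fintype W]

/-- The conditional entropy `H(M|W)` of a joint mass function. -/
def condEntropy (r : M × W → ℝ) : ℝ := entropy r - entropy (pushf r Prod.snd)

lemma entropy_pushf_of_injective {f : α → β} (hf : Function.Injective f) (p : α → ℝ) :
    entropy (pushf p f) = entropy p := by
  simp only [entropy, sum_pushf_mul, pushf_apply_of_injective hf]

lemma entropy_comp_equiv (e : β ≃ α) (p : α → ℝ) : entropy (p ∘ e) = entropy p :=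
  congrArg Neg.neg (e.sum_comp fun a => p a * Real.log (p a))

lemma entropy_pushf_le {p : α → ℝ} (hp : ∀ a, 0 ≤ p a) (f : α → β) :
    entropy (pushf p f) ≤ entropy p := by
  rw [entropy, entropy, sum_pushf_mul, neg_le_neg_iff]
  refine Finset.sum_le_sum fun a _ => ?_
  rcases (hp a).eq_or_lt with h | h
  · simp [← h]
  exact mul_le_mul_of_nonneg_left (Real.log_le_log h (le_pushf_apply hp f a)) h.le

lemma entropy_pushf_sub_entropy {p : α → ℝ} (hp : ∀ a, 0 ≤ p a) (f : α → β) :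
    entropy (pushf p f) - entropy p = relEntropy p fun a => pushf p f (f a) := by
  have hlog (a : α) : p a * Real.log (p a / pushf p f (f a)) =
      p a * Real.log (p a) - p a * Real.log (pushf p f (f a)) := by
    rcases (hp a).eq_or_lt with h | h
    · simp [← h]
    rw [Real.log_div h.ne' (h.trans_le (le_pushf_apply hp f a)).ne', mul_sub]
  simp only [relEntropy, hlog, Finset.sum_sub_distrib, entropy, sum_pushf_mul]
  ring

lemma condEntropy_nonneg {r : M × W → ℝ} (hr : ∀ s, 0 ≤ r s) : 0 ≤ condEntropy r :=
  sub_nonneg.2 (entropy_pushf_le hr Prod.snd)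

lemma condEntropy_le_log_card [Nonempty M] {r : M × W → ℝ} (hr : IsPMF r) :
    condEntropy r ≤ Real.log (Fintype.card M) := by
  set N : ℝ := (Fintype.card M : ℝ)
  have hN : N ≠ 0 := Nat.cast_ne_zero.2 Fintype.card_ne_zero
  set m := pushf r Prod.snd with hm
  have slice (w : W) : m w * Real.log (m w) - m w * Real.log N ≤
      ∑ k, r (k, w) * Real.log (r (k, w)) := by
    have h := log_sum_inequality Finset.univ (fun k => hr.1 (k, w)) (b := fun _ : M => (1 : ℝ))
      (fun _ => zero_le_one) (fun _ h => (one_ne_zero h).elim)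
    rw [← pushf_snd_apply, ← hm] at h
    rcases eq_or_ne (m w) 0 with h0 | h0
    · simpa [h0] using h
    · simpa [Real.log_div h0 hN, mul_sub, N] using h
  have total : ∑ w, m w = 1 := (sum_pushf r _).trans hr.2
  have h := Finset.sum_le_sum fun w (_ : w ∈ Finset.univ) => slice w
  rw [Finset.sum_sub_distrib, ← Finset.sum_mul, total, one_mul,
    ← Fintype.sum_prod_type_right (fun s => r s * Real.log (r s))] at h
  simp only [condEntropy, entropy, ← hm]
  linarith

lemma condEntropy_pushf_map_id_of_injective {f : W → α} (hf : Function.Injective f)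
    (r : M × W → ℝ) : condEntropy (pushf r (Prod.map id f)) = condEntropy r := by
  have hsnd : pushf (pushf r (Prod.map id f)) Prod.snd = pushf (pushf r Prod.snd) f := by
    rw [pushf_pushf, pushf_pushf]
    rfl
  rw [condEntropy, hsnd, entropy_pushf_of_injective hf,
    entropy_pushf_of_injective (Function.injective_id.prodMap hf), condEntropy]

lemma mul_log_mul (x y : ℝ) :
    x * y * Real.log (x * y) = y * (x * Real.log x) + x * (y * Real.log y) := by
  have h := Real.negMulLog_mul x y
  simp only [Real.negMulLog] at h
  linarith

lemma entropy_mul {p : α → ℝ} {q : β → ℝ} (hp : ∑ a, p a = 1) (hq : ∑ b, q b = 1) :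
    entropy (fun s : α × β => p s.1 * q s.2) = entropy p + entropy q := by
  simp only [entropy, Fintype.sum_prod_type, mul_log_mul, Finset.sum_add_distrib,
    ← Finset.mul_sum, hq, ← Finset.sum_mul, hp, one_mul]
  ring

end Entropy

section Observation

variable {X U U' V W : Type*} [Fintype X]

/-- The law of `(U, V)` when `(X, V)` has law `p` and `U` is produced from `X` by the channel
`ch`: what the decision centre sees. -/
def observedLaw {X U V : Type*} [Fintype X] (p : X × V → ℝ) (ch : X → U → ℝ) : U × V → ℝ :=
  fun s => ∑ x, p (x, s.2) * ch x s.1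

lemma observedLaw_nonneg {p : X × V → ℝ} (hp : ∀ s, 0 ≤ p s) {ch : X → U → ℝ}
    (hch : ∀ x u, 0 ≤ ch x u) (s : U × V) : 0 ≤ observedLaw p ch s :=
  Finset.sum_nonneg fun _ _ => mul_nonneg (hp _) (hch _ _)

lemma AbsCont.observedLaw {p q : X × V → ℝ} (hpq : AbsCont p q) (hq : ∀ s, 0 ≤ q s)
    {g h : X → U → ℝ} (hgh : ∀ x, AbsCont (g x) (h x)) (hh : ∀ x u, 0 ≤ h x u) :
    AbsCont (observedLaw p g) (observedLaw q h) := by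
  intro s hs
  have hzero := (Finset.sum_eq_zero_iff_of_nonneg
    fun x _ => mul_nonneg (hq (x, s.2)) (hh x s.1)).1 hs
  refine Finset.sum_eq_zero fun x hx => ?_
  rcases mul_eq_zero.1 (hzero x hx) with h | h
  · rw [hpq _ h, zero_mul]
  · rw [hgh x _ h, mul_zero]

variable [Fintype U]

lemma observedLaw_pushf_channel (p : X × V → ℝ) (ch : X → U → ℝ) (F : U → U') (v : V) :
    (fun u => observedLaw p (fun x => pushf (ch x) F) (u, v)) =
      pushf (fun u => observedLaw p ch (u, v)) F := by
  classical
  funext u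
  simp only [observedLaw, pushf_apply, Finset.mul_sum]
  exact Finset.sum_comm

variable [Fintype V]

lemma pushf_snd_observedLaw (p : X × V → ℝ) {ch : X → U → ℝ} (hch : ∀ x, ∑ u, ch x u = 1) :
    pushf (observedLaw p ch) Prod.snd = pushf p Prod.snd := by
  funext v
  simp only [pushf_snd_apply, observedLaw]
  rw [Finset.sum_comm]
  simp only [← Finset.mul_sum, hch, mul_one]

lemma IsPMF.observedLaw {p : X × V → ℝ} (hp : IsPMF p) {ch : X → U → ℝ}
    (hch : ∀ x, IsPMF (ch x)) : IsPMF (observedLaw p ch) := by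
  refine ⟨observedLaw_nonneg hp.1 fun x => (hch x).1, ?_⟩
  rw [← sum_pushf _ Prod.snd, pushf_snd_observedLaw p fun x => (hch x).2, sum_pushf, hp.2]

lemma observedLaw_pushf_map_id (p : X × V → ℝ) (ch : X → U → ℝ) (f : V → W) :
    observedLaw (pushf p (Prod.map id f)) ch = pushf (observedLaw p ch) (Prod.map id f) := by
  classical
  funext ⟨u, w⟩
  simp only [observedLaw, pushf_map_id_apply, Finset.sum_mul]
  exact Finset.sum_comm

end Observation

section Tensor

variable {ι X V W : Type*} [Fintype ι]

/-- The law of a block `(X^ι, V^ι)` with independent letters `(X_i, V_i)` of law `c i`. -/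
def tensor {ι X V : Type*} [Fintype ι] (c : ι → X × V → ℝ) : (ι → X) × (ι → V) → ℝ :=
  fun s => ∏ i, c i (s.1 i, s.2 i)

lemma tensor_nonneg {c : ι → X × V → ℝ} (hc : ∀ i s, 0 ≤ c i s) (s : (ι → X) × (ι → V)) :
    0 ≤ tensor c s :=
  Finset.prod_nonneg fun i _ => hc i _

lemma AbsCont.tensor {c c' : ι → X × V → ℝ} (hc : ∀ i, AbsCont (c i) (c' i)) :
    AbsCont (tensor c) (tensor c') := by
  intro s hs
  obtain ⟨i, hi, h⟩ := Finset.prod_eq_zero_iff.1 hs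
  exact Finset.prod_eq_zero hi (hc i _ h)

variable [DecidableEq ι] [Fintype X] [Fintype V]

lemma pushf_snd_tensor (c : ι → X × V → ℝ) (v : ι → V) :
    pushf (tensor c) Prod.snd v = ∏ i, pushf (c i) Prod.snd (v i) := by
  simp only [pushf_snd_apply, tensor, Fintype.prod_sum]

lemma IsPMF.tensor {c : ι → X × V → ℝ} (hc : ∀ i, IsPMF (c i)) : IsPMF (tensor c) := by
  refine ⟨tensor_nonneg fun i => (hc i).1, ?_⟩
  rw [← sum_pushf _ Prod.snd]
  simp only [pushf_snd_tensor]
  rw [← Fintype.prod_sum]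
  exact Finset.prod_eq_one fun i _ => (sum_pushf (c i) _).trans (hc i).2

lemma tensor_pushf_map_id (c : ι → X × V → ℝ) (f : V → W) :
    tensor (fun i => pushf (c i) (Prod.map id f)) =
      pushf (tensor c) (Prod.map id fun v i => f (v i)) := by
  classical
  funext ⟨x, w⟩
  simp only [tensor, pushf_map_id_apply, Finset.prod_univ_sum]
  refine Finset.sum_congr ?_ fun _ _ => rfl
  ext v
  simp [Fintype.mem_piFinset, funext_iff]

end Tensor

section SingleLetter

variable {ι M X V W : Type*} [Fintype ι] [DecidableEq ι] [Fintype X]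

/-- Separates the `i`-th letter from the message and the other letters. -/
def splitEquiv (M V : Type*) (i : ι) : M × (ι → V) ≃ (M × ({j // j ≠ i} → V)) × V :=
  ((Equiv.refl M).prodCongr ((Equiv.funSplitAt i V).trans (Equiv.prodComm _ _))).trans
    (Equiv.prodAssoc _ _ _).symm

/-- The single-letter channel from `X_i` to the auxiliary variable `(M, V_j : j ≠ i)`, when `κ`
encodes the block `X^ι` into the message `M` and the letters `(X_j, V_j)` have law `c j`. -/
def restChannel {ι M X V : Type*} [Fintype ι] [DecidableEq ι] [Fintype X] (i : ι)
    (c : ι → X × V → ℝ) (κ : (ι → X) → M → ℝ) : X → M × ({j // j ≠ i} → V) → ℝ :=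
  fun x => observedLaw (tensor fun j : {j // j ≠ i} => c j)
    fun x' => κ ((Equiv.funSplitAt i X).symm (x, x'))

lemma observedLaw_tensor (i : ι) (c : ι → X × V → ℝ) (κ : (ι → X) → M → ℝ) :
    observedLaw (tensor c) κ = observedLaw (c i) (restChannel i c κ) ∘ splitEquiv M V i := by
  funext ⟨k, v⟩
  simp only [observedLaw, restChannel, Finset.mul_sum, Function.comp_apply]
  rw [← (Equiv.funSplitAt i X).symm.sum_comp, Fintype.sum_prod_type]
  refine Finset.sum_congr rfl fun x _ => Finset.sum_congr rfl fun x' _ => ?_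
  rw [tensor, Fintype.prod_eq_mul_prod_subtype_ne _ i, mul_assoc]
  congr 2
  · simp [splitEquiv]
  · exact Finset.prod_congr rfl fun j _ => by simp [splitEquiv, j.2]

lemma restChannel_congr {i : ι} {c c' : ι → X × V → ℝ} (h : ∀ j ≠ i, c j = c' j)
    (κ : (ι → X) → M → ℝ) : restChannel i c κ = restChannel i c' κ := by
  have hc : (fun j : {j // j ≠ i} => c j) = fun j : {j // j ≠ i} => c' j :=
    funext fun j => h j j.2
  funext x
  simp only [restChannel, hc]

lemma absCont_restChannel (i : ι) {c c' : ι → X × V → ℝ} (hcc' : ∀ j, AbsCont (c j) (c' j))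
    (hc' : ∀ j s, 0 ≤ c' j s) {κ : (ι → X) → M → ℝ} (hκ : ∀ x k, 0 ≤ κ x k) (x : X) :
    AbsCont (restChannel i c κ x) (restChannel i c' κ x) :=
  (AbsCont.tensor fun j : {j // j ≠ i} => hcc' j).observedLaw (tensor_nonneg fun j => hc' j)
    (fun _ _ h => h) fun _ => hκ _

variable [Fintype M] [Fintype V]

lemma isPMF_restChannel (i : ι) {c : ι → X × V → ℝ} (hc : ∀ j, IsPMF (c j))
    {κ : (ι → X) → M → ℝ} (hκ : ∀ x, IsPMF (κ x)) (x : X) : IsPMF (restChannel i c κ x) :=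
  (IsPMF.tensor fun j : {j // j ≠ i} => hc j).observedLaw fun _ => hκ _

lemma restChannel_pushf (i : ι) (c : ι → X × V → ℝ) (κ : (ι → X) → M → ℝ) (f : V → W) (x : X) :
    restChannel i (fun j => pushf (c j) (Prod.map id f)) κ x =
      pushf (restChannel i c κ x) (Prod.map id fun v j => f (v j)) := by
  rw [restChannel, tensor_pushf_map_id (fun j : {j // j ≠ i} => c j), observedLaw_pushf_map_id]
  rfl

lemma relEntropy_observedLaw_tensor (i : ι) (c c' : ι → X × V → ℝ) (κ : (ι → X) → M → ℝ) :
    relEntropy (observedLaw (tensor c) κ) (observedLaw (tensor c') κ) =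
      relEntropy (observedLaw (c i) (restChannel i c κ))
        (observedLaw (c' i) (restChannel i c' κ)) := by
  rw [observedLaw_tensor i c, observedLaw_tensor i c', relEntropy_comp_equiv]

lemma entropy_pushf_snd_tensor (i : ι) {c : ι → X × V → ℝ} (hc : ∀ j, IsPMF (c j)) :
    entropy (pushf (tensor c) Prod.snd) = entropy (pushf (c i) Prod.snd) +
      entropy (pushf (tensor fun j : {j // j ≠ i} => c j) Prod.snd) := by
  rw [← entropy_mul, ← entropy_comp_equiv (Equiv.funSplitAt i V)]
  · congr 1
    funext v
    simp only [pushf_snd_tensor, Function.comp_apply]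
    exact Fintype.prod_eq_mul_prod_subtype_ne (fun j => pushf (c j) Prod.snd (v j)) i
  · exact ((hc i).pushf _).2
  · exact ((IsPMF.tensor fun j : {j // j ≠ i} => hc j).pushf _).2

lemma condEntropy_observedLaw_tensor (i : ι) {c : ι → X × V → ℝ} (hc : ∀ j, IsPMF (c j))
    {κ : (ι → X) → M → ℝ} (hκ : ∀ x, IsPMF (κ x)) :
    condEntropy (observedLaw (tensor c) κ) =
      condEntropy (observedLaw (c i) (restChannel i c κ)) -
        entropy (pushf (tensor fun j : {j // j ≠ i} => c j) Prod.snd) := by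
  have hrest (x : X) := (isPMF_restChannel i hc hκ x).2
  rw [condEntropy, condEntropy, pushf_snd_observedLaw _ fun x => (hκ x).2,
    pushf_snd_observedLaw _ hrest, entropy_pushf_snd_tensor i hc,
    observedLaw_tensor i, entropy_comp_equiv]
  ring

end SingleLetter

section MutualInformation

variable {X U U' V W : Type*} [Fintype X] [Fintype U] [Fintype V]

/-- The law of `(U, X, V)` when `(X, V)` has law `p` and `U` is produced from `X` by the channel
`ch`, so that `U – X – V` is a Markov chain. -/
def tripleLaw {X U V : Type*} (p : X × V → ℝ) (ch : X → U → ℝ) : U × X × V → ℝ :=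
  fun w => ch w.2.1 w.1 * p (w.2.1, w.2.2)

/-- The conditional mutual information `I(U;X|V)` under `tripleLaw p ch`. -/
def markovMI (p : X × V → ℝ) (ch : X → U → ℝ) : ℝ :=
  condMI (tripleLaw p ch) (fun w => w.1) (fun w => w.2.1) (fun w => w.2.2)

lemma pushf_tripleLaw_fst_snd (p : X × V → ℝ) (ch : X → U → ℝ) :
    pushf (tripleLaw p ch) (fun w => (w.1, w.2.2)) = observedLaw p ch := by
  classical
  funext ⟨u, v⟩
  rw [pushf_apply, Finset.sum_filter]
  simp [Fintype.sum_prod_type, Prod.ext_iff, ite_and, tripleLaw, observedLaw, mul_comm]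

lemma pushf_snd_tripleLaw (p : X × V → ℝ) {ch : X → U → ℝ} (hch : ∀ x, ∑ u, ch x u = 1) :
    pushf (tripleLaw p ch) Prod.snd = p := by
  funext s
  simp only [pushf_snd_apply, tripleLaw, ← Finset.sum_mul, hch, one_mul]

lemma entropy_tripleLaw (p : X × V → ℝ) {ch : X → U → ℝ} (hch : ∀ x, ∑ u, ch x u = 1) :
    entropy (tripleLaw p ch) = entropy p + ∑ x, margFst p x * entropy (ch x) := by
  have hsum : ∑ w, tripleLaw p ch w * Real.log (tripleLaw p ch w) =
      ∑ s, (p s * Real.log (p s) + p s * ∑ u, ch s.1 u * Real.log (ch s.1 u)) := by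
    rw [Fintype.sum_prod_type_right]
    simp only [tripleLaw, mul_log_mul, Finset.sum_add_distrib, ← Finset.sum_mul, hch, one_mul,
      ← Finset.mul_sum]
    exact add_comm _ _
  rw [entropy, hsum, Finset.sum_add_distrib, neg_add, ← pushf_fst, sum_pushf_mul]
  simp only [entropy, mul_neg, Finset.sum_neg_distrib]

lemma markovMI_eq_condEntropy_sub (p : X × V → ℝ) {ch : X → U → ℝ}
    (hch : ∀ x, ∑ u, ch x u = 1) :
    markovMI p ch = condEntropy (observedLaw p ch) - ∑ x, margFst p x * entropy (ch x) := by
  have hXV : pushf (tripleLaw p ch) (fun w => (w.2.1, w.2.2)) = p := pushf_snd_tripleLaw p hch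
  have hV : pushf (tripleLaw p ch) (fun w => w.2.2) = pushf p Prod.snd := by
    conv_rhs => rw [← pushf_snd_tripleLaw p hch, pushf_pushf]
    rfl
  have hUXV : pushf (tripleLaw p ch) (fun w => (w.1, w.2.1, w.2.2)) = tripleLaw p ch :=
    pushf_id _
  rw [markovMI, condMI, pushf_tripleLaw_fst_snd, hXV, hUXV, hV, entropy_tripleLaw p hch,
    condEntropy, pushf_snd_observedLaw p hch]
  ring

/-- This is `H(X|V) - H(X|U,V)`, the last term written as a relative entropy. -/
lemma markovMI_eq_relEntropy {p : X × V → ℝ} (hp : ∀ s, 0 ≤ p s) {ch : X → U → ℝ}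
    (hch : ∀ x, IsPMF (ch x)) :
    markovMI p ch = entropy p - entropy (pushf p Prod.snd) +
      relEntropy (tripleLaw p ch) fun w => observedLaw p ch (w.1, w.2.2) := by
  have hsum (x : X) := (hch x).2
  have htriple : ∀ w, 0 ≤ tripleLaw p ch w := fun w => mul_nonneg ((hch _).1 _) (hp _)
  have h := entropy_pushf_sub_entropy htriple fun w => (w.1, w.2.2)
  rw [pushf_tripleLaw_fst_snd, entropy_tripleLaw p hsum] at h
  rw [← h, markovMI_eq_condEntropy_sub p hsum, condEntropy, pushf_snd_observedLaw p hsum]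
  ring

lemma tripleLaw_pushf_channel (p : X × V → ℝ) (ch : X → U → ℝ) (F : U → U') :
    tripleLaw p (fun x => pushf (ch x) F) = pushf (tripleLaw p ch) (Prod.map F id) := by
  classical
  funext ⟨u, x, v⟩
  rw [pushf_map_left_apply]
  simp only [tripleLaw, pushf_apply, Finset.sum_mul]

lemma markovMI_pushf_channel_le [Fintype U'] {p : X × V → ℝ} (hp : ∀ s, 0 ≤ p s) {ch : X → U → ℝ}
    (hch : ∀ x, IsPMF (ch x)) (F : U → U') :
    markovMI p (fun x => pushf (ch x) F) ≤ markovMI p ch := by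
  have hchF (x : X) : IsPMF (pushf (ch x) F) := (hch x).pushf F
  have hobs : (fun w : U' × X × V => observedLaw p (fun x => pushf (ch x) F) (w.1, w.2.2)) =
      pushf (fun w : U × X × V => observedLaw p ch (w.1, w.2.2)) (Prod.map F id) := by
    funext ⟨u, x, v⟩
    rw [pushf_map_left_apply, ← observedLaw_pushf_channel]
  have hnonneg := observedLaw_nonneg hp fun x => (hch x).1
  rw [markovMI_eq_relEntropy hp hchF, markovMI_eq_relEntropy hp hch, tripleLaw_pushf_channel, hobs]
  gcongr
  refine relEntropy_pushf_le (fun w => mul_nonneg ((hch _).1 _) (hp _)) (fun w => hnonneg _)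
    (fun w hw => ?_) _
  have h := (Finset.sum_eq_zero_iff_of_nonneg fun x _ => mul_nonneg (hp _) ((hch x).1 _)).1 hw
  exact (mul_comm _ _).trans <| h w.2.1 (Finset.mem_univ _)

lemma markovMI_pushf_map_id_of_injective [Fintype W] {f : V → W} (hf : Function.Injective f)
    (p : X × V → ℝ) {ch : X → U → ℝ} (hch : ∀ x, ∑ u, ch x u = 1) :
    markovMI (pushf p (Prod.map id f)) ch = markovMI p ch := by
  rw [markovMI_eq_condEntropy_sub _ hch, markovMI_eq_condEntropy_sub _ hch,
    observedLaw_pushf_map_id, condEntropy_pushf_map_id_of_injective hf,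
    margFst_pushf (f := Prod.map id f) p fun _ => rfl]

lemma markovMI_comp_equiv [Fintype U'] {p : X × V → ℝ} (hp : ∀ s, 0 ≤ p s) {ch : X → U → ℝ}
    (hch : ∀ x, IsPMF (ch x)) (e : U' ≃ U) :
    markovMI p (fun x => ch x ∘ e) = markovMI p ch := by
  have hche (x : X) : IsPMF (ch x ∘ e) :=
    ⟨fun u => (hch x).1 _, (e.sum_comp (ch x)).trans (hch x).2⟩
  rw [markovMI_eq_relEntropy hp hche, markovMI_eq_relEntropy hp hch,
    ← relEntropy_comp_equiv (e.prodCongr (Equiv.refl (X × V)))]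
  rfl

end MutualInformation

section TimeSharing

variable {ι X V A : Type*} {U : ι → Type*} [Fintype ι]

/-- The time-sharing channel: draws an index `i` uniformly, applies the channel `ch i` and
outputs the result together with `i`. -/
def timeShare {ι X : Type*} {U : ι → Type*} [Fintype ι] (ch : ∀ i, X → U i → ℝ) :
    X → (Σ i, U i) → ℝ :=
  fun x t => (Fintype.card ι : ℝ)⁻¹ * ch t.1 x t.2

lemma AbsCont.timeShare {g h : ∀ i, X → U i → ℝ} (hgh : ∀ i x, AbsCont (g i x) (h i x)) (x : X) :
    AbsCont (timeShare g x) (timeShare h x) := by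
  rintro ⟨i, u⟩ hu
  have : Nonempty ι := ⟨i⟩
  have hcard : (Fintype.card ι : ℝ)⁻¹ ≠ 0 := by simp
  exact mul_eq_zero_of_right _ (hgh i x u ((mul_eq_zero.1 hu).resolve_left hcard))

lemma isPMF_timeShare [∀ i, Fintype (U i)] [Nonempty ι] {ch : ∀ i, X → U i → ℝ}
    (hch : ∀ i x, IsPMF (ch i x)) (x : X) : IsPMF (timeShare ch x) := by
  refine ⟨fun t => mul_nonneg (by positivity) ((hch _ _).1 _), ?_⟩
  simp [timeShare, Fintype.sum_sigma, ← Finset.mul_sum, (hch _ _).2]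

variable [Fintype X]

lemma observedLaw_timeShare (p : X × V → ℝ) (ch : ∀ i, X → U i → ℝ) (i : ι) :
    (fun s : U i × V => observedLaw p (timeShare ch) (⟨i, s.1⟩, s.2)) =
      (Fintype.card ι : ℝ)⁻¹ • observedLaw p (ch i) := by
  funext s
  simp only [observedLaw, timeShare, Pi.smul_apply, smul_eq_mul, Finset.mul_sum, mul_left_comm]

variable [∀ i, Fintype (U i)] [Fintype V]

lemma relEntropy_sigma [Fintype A] (p q : (Σ i, U i) × A → ℝ) :
    relEntropy p q = ∑ i, relEntropy (fun s : U i × A => p (⟨i, s.1⟩, s.2))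
      fun s : U i × A => q (⟨i, s.1⟩, s.2) := by
  simp only [relEntropy, Fintype.sum_prod_type, Fintype.sum_sigma]

lemma relEntropy_observedLaw_timeShare (p q : X × V → ℝ) (g h : ∀ i, X → U i → ℝ) :
    relEntropy (observedLaw p (timeShare g)) (observedLaw q (timeShare h)) =
      (Fintype.card ι : ℝ)⁻¹ *
        ∑ i, relEntropy (observedLaw p (g i)) (observedLaw q (h i)) := by
  simp only [relEntropy_sigma, observedLaw_timeShare, relEntropy_smul, Finset.mul_sum]

lemma markovMI_timeShare [Nonempty ι] {p : X × V → ℝ} (hp : ∀ s, 0 ≤ p s)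
    {ch : ∀ i, X → U i → ℝ} (hch : ∀ i x, IsPMF (ch i x)) :
    markovMI p (timeShare ch) = (Fintype.card ι : ℝ)⁻¹ * ∑ i, markovMI p (ch i) := by
  have htriple (i : ι) :
      (fun s : U i × X × V => tripleLaw p (timeShare ch) (⟨i, s.1⟩, s.2)) =
        (Fintype.card ι : ℝ)⁻¹ • tripleLaw p (ch i) := by
    funext s
    simp only [tripleLaw, timeShare, Pi.smul_apply, smul_eq_mul, mul_assoc]
  have hobs (i : ι) :
      (fun s : U i × X × V => observedLaw p (timeShare ch) (⟨i, s.1⟩, s.2.2)) =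
        (Fintype.card ι : ℝ)⁻¹ • fun s : U i × X × V => observedLaw p (ch i) (s.1, s.2.2) :=
    funext fun s => congrFun (observedLaw_timeShare p ch i) (s.1, s.2.2)
  simp only [markovMI_eq_relEntropy hp (isPMF_timeShare hch),
    fun i => markovMI_eq_relEntropy hp (hch i), relEntropy_sigma, htriple, hobs, relEntropy_smul,
    Finset.sum_add_distrib, Finset.sum_const, Finset.card_univ, nsmul_eq_mul, mul_add,
    Finset.mul_sum]
  field_simp

end TimeSharing

section SideInformation

variable {X U W : Type*} [Fintype X] [Fintype U] [Fintype W]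

/-- The law of `(X, V)` for side information `V = (none, W)` that carries `W` only, in the common
alphabet `Option X × W` it shares with `revealInput`. -/
def hideInput (a : X × W → ℝ) : X × (Option X × W) → ℝ := pushf a (Prod.map id (Prod.mk none))

/-- The law of `(X, V)` for side information `V = (some X, W)` that also discloses `X`. -/
def revealInput (b : X × W → ℝ) : X × (Option X × W) → ℝ := pushf b fun s => (s.1, some s.1, s.2)

lemma pushf_hideInput (a : X × W → ℝ) : pushf (hideInput a) (Prod.map id Prod.snd) = a :=
  (pushf_pushf a _ _).trans (pushf_id a)

lemma pushf_revealInput (b : X × W → ℝ) : pushf (revealInput b) (Prod.map id Prod.snd) = b :=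
  (pushf_pushf b _ _).trans (pushf_id b)

lemma observedLaw_revealInput (b : X × W → ℝ) (ch : X → U → ℝ) :
    observedLaw (revealInput b) ch =
      pushf (tripleLaw b ch) fun w => (w.1, some w.2.1, w.2.2) := by
  classical
  funext ⟨u, o, w⟩
  simp only [observedLaw, revealInput, pushf_apply, Finset.sum_filter]
  simp [Fintype.sum_prod_type, Prod.ext_iff, ite_and, tripleLaw, mul_comm]

lemma condEntropy_observedLaw_revealInput (b : X × W → ℝ) {ch : X → U → ℝ}
    (hch : ∀ x, ∑ u, ch x u = 1) :
    condEntropy (observedLaw (revealInput b) ch) = ∑ x, margFst b x * entropy (ch x) := by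
  have hinj : Function.Injective fun w : U × X × W => (w.1, some w.2.1, w.2.2) := by
    rintro ⟨u, x, w⟩ ⟨u', x', w'⟩ h
    simpa using h
  have hinj' : Function.Injective fun s : X × W => (some s.1, s.2) :=
    (Option.some_injective X).prodMap Function.injective_id
  have hmarg : pushf (revealInput b) Prod.snd = pushf b fun s => (some s.1, s.2) :=
    pushf_pushf b _ _
  rw [condEntropy, pushf_snd_observedLaw _ hch, hmarg, entropy_pushf_of_injective hinj',
    observedLaw_revealInput, entropy_pushf_of_injective hinj, entropy_tripleLaw b hch]
  ring

end SideInformation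

section Hybrid

variable {ι S T : Type*} [DecidableEq ι]

/-- The hybrid sequence with value `a` at the positions in `s` and `b` elsewhere. -/
def hybrid (s : Finset ι) (a b : S) : ι → S := fun j => if j ∈ s then a else b

lemma hybrid_forall (s : Finset ι) {a b : S} {p : S → Prop} (ha : p a) (hb : p b) (j : ι) :
    p (hybrid s a b j) := by
  unfold hybrid
  split_ifs <;> assumption

lemma hybrid_forall₂ (s : Finset ι) {a b : S} {a' b' : T} {r : S → T → Prop} (ha : r a a')
    (hb : r b b') (j : ι) : r (hybrid s a b j) (hybrid s a' b' j) := by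
  unfold hybrid
  split_ifs <;> assumption

lemma apply_hybrid (s : Finset ι) (f : S → T) (a b : S) :
    (fun j => f (hybrid s a b j)) = hybrid s (f a) (f b) :=
  funext fun _ => apply_ite f _ _ _

lemma hybrid_insert_self (i : ι) (s : Finset ι) (a b : S) : hybrid (insert i s) a b i = a :=
  if_pos (Finset.mem_insert_self i s)

lemma hybrid_of_notMem {i : ι} {s : Finset ι} (hi : i ∉ s) (a b : S) : hybrid s a b i = b :=
  if_neg hi

lemma hybrid_insert_of_ne {i j : ι} (h : j ≠ i) (s : Finset ι) (a b : S) :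
    hybrid (insert i s) a b j = hybrid s a b j := by
  simp [hybrid, h]

lemma hybrid_univ [Fintype ι] (a b : S) : hybrid (Finset.univ : Finset ι) a b = fun _ => a :=
  funext fun _ => if_pos (Finset.mem_univ _)

lemma hybrid_empty (a b : S) : hybrid (∅ : Finset ι) a b = fun _ => b :=
  funext fun _ => if_neg (Finset.notMem_empty _)

lemma hybrid_Iio_eq_hybrid_Ioi {n : ℕ} {i j : Fin n} (h : j ≠ i) (a b : S) :
    hybrid (Finset.Iio i) a b j = hybrid (Finset.Ioi i) b a j := by
  rcases lt_or_gt_of_ne h with h | h <;> simp [hybrid, h, h.le]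

lemma sum_insert_Iio_sub {n : ℕ} (F : Finset (Fin n) → ℝ) :
    ∑ i, (F (insert i (Finset.Iio i)) - F (Finset.Iio i)) = F Finset.univ - F ∅ := by
  let G (k : ℕ) : ℝ := F {j | j.val < k}
  have hsucc (i : Fin n) : F (insert i (Finset.Iio i)) = G (i + 1) := by
    simp only [G]
    congr 1
    ext j
    simp
  have hIio (i : Fin n) : F (Finset.Iio i) = G i := by
    simp only [G]
    congr 1
    ext j
    simp
  simp only [hsucc, hIio]
  rw [Fin.sum_univ_eq_sum_range fun k => G (k + 1) - G k, Finset.sum_range_sub]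
  simp [G]

lemma sum_insert_Ioi_sub {n : ℕ} (F : Finset (Fin n) → ℝ) :
    ∑ i, (F (insert i (Finset.Ioi i)) - F (Finset.Ioi i)) = F Finset.univ - F ∅ := by
  have hIoi (i : Fin n) : (insert i (Finset.Iio i))ᶜ = Finset.Ioi i := by
    ext j
    simp
  have hIci (i : Fin n) : (Finset.Iio i)ᶜ = insert i (Finset.Ioi i) := by
    ext j
    simp
  have h := sum_insert_Iio_sub fun s => -F sᶜ
  simpa only [neg_sub_neg, Finset.compl_univ, Finset.compl_empty, hIoi, hIci] using h

end Hybrid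

section Hybridization

variable {ι M X V W : Type*} [Fintype M] [Fintype X] [Fintype V] [Fintype W]

/-- Disclosing `X_j` at the positions `j ∉ s` refines the auxiliary variable, and makes the bound
an increment of one set function. -/
lemma markovMI_restChannel_hybrid_le [Fintype ι] [DecidableEq ι] {i : ι} {s : Finset ι}
    (hi : i ∉ s) {a b : X × W → ℝ} (ha : IsPMF a) (hb : IsPMF b) (hab : margFst a = margFst b)
    {κ : (ι → X) → M → ℝ} (hκ : ∀ x, IsPMF (κ x)) :
    markovMI a (restChannel i (hybrid s a b) κ) ≤
      condEntropy (observedLaw (tensor (hybrid (insert i s) (hideInput a) (revealInput b))) κ) -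
        condEntropy (observedLaw (tensor (hybrid s (hideInput a) (revealInput b))) κ) := by
  have hc (t : Finset ι) : ∀ j, IsPMF (hybrid t (hideInput a) (revealInput b) j) :=
    hybrid_forall t (ha.pushf _) (hb.pushf _)
  set r := restChannel i (hybrid s (hideInput a) (revealInput b)) κ with hr
  have hrPMF : ∀ x, IsPMF (r x) := isPMF_restChannel i (hc s) hκ
  have hcoarse : restChannel i (hybrid s a b) κ =
      fun x => pushf (r x) (Prod.map id fun v j => (v j).2) := by
    funext x
    rw [← restChannel_pushf, apply_hybrid s fun c => pushf c (Prod.map id Prod.snd),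
      pushf_hideInput, pushf_revealInput]
  calc markovMI a (restChannel i (hybrid s a b) κ)
      ≤ markovMI a r := hcoarse ▸ markovMI_pushf_channel_le ha.1 hrPMF _
    _ = markovMI (hideInput a) r :=
        (markovMI_pushf_map_id_of_injective (Prod.mk_right_injective none) a
          fun x => (hrPMF x).2).symm
    _ = condEntropy (observedLaw (hideInput a) r) -
          condEntropy (observedLaw (revealInput b) r) := by
        rw [markovMI_eq_condEntropy_sub _ fun x => (hrPMF x).2,
          condEntropy_observedLaw_revealInput b fun x => (hrPMF x).2, ← hab, hideInput,
          margFst_pushf (f := Prod.map id (Prod.mk none)) a fun _ => rfl]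
    _ = _ := by
        have hoff (j : ι) (hj : j ≠ i) := hybrid_insert_of_ne hj s (hideInput a) (revealInput b)
        have hoff' (j : {j // j ≠ i}) := hoff j j.2
        rw [condEntropy_observedLaw_tensor i (hc _) hκ, condEntropy_observedLaw_tensor i (hc s) hκ,
          restChannel_congr hoff, hybrid_insert_self, hybrid_of_notMem hi]
        simp only [hoff', ← hr]
        ring

lemma condEntropy_hybrid_univ_sub_empty_le [Fintype ι] [DecidableEq ι] [Nonempty M]
    {a b : X × V → ℝ} (ha : IsPMF a) (hb : IsPMF b) {κ : (ι → X) → M → ℝ}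
    (hκ : ∀ x, IsPMF (κ x)) :
    condEntropy (observedLaw (tensor (hybrid Finset.univ a b)) κ) -
        condEntropy (observedLaw (tensor (hybrid ∅ a b)) κ) ≤
      Real.log (Fintype.card M) := by
  have hpmf (s : Finset ι) : IsPMF (observedLaw (tensor (hybrid s a b)) κ) :=
    (IsPMF.tensor (hybrid_forall s ha hb)).observedLaw hκ
  linarith [condEntropy_le_log_card (hpmf Finset.univ), condEntropy_nonneg (hpmf ∅).1]

lemma sum_markovMI_hybrid_le [Fintype ι] [DecidableEq ι] [Nonempty M] {s : ι → Finset ι}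
    (hs : ∀ i, i ∉ s i)
    (telescope : ∀ F : Finset ι → ℝ,
      ∑ i, (F (insert i (s i)) - F (s i)) = F Finset.univ - F ∅)
    {a b : X × W → ℝ} (ha : IsPMF a) (hb : IsPMF b) (hab : margFst a = margFst b)
    {κ : (ι → X) → M → ℝ} (hκ : ∀ x, IsPMF (κ x)) :
    ∑ i, markovMI a (restChannel i (hybrid (s i) a b) κ) ≤ Real.log (Fintype.card M) := by
  let F (t : Finset ι) : ℝ :=
    condEntropy (observedLaw (tensor (hybrid t (hideInput a) (revealInput b))) κ)
  calc ∑ i, markovMI a (restChannel i (hybrid (s i) a b) κ)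
      ≤ ∑ i, (F (insert i (s i)) - F (s i)) :=
        Finset.sum_le_sum fun i _ => markovMI_restChannel_hybrid_le (hs i) ha hb hab hκ
    _ = F Finset.univ - F ∅ := telescope F
    _ ≤ Real.log (Fintype.card M) :=
        condEntropy_hybrid_univ_sub_empty_le (ha.pushf _) (hb.pushf _) hκ

lemma relEntropy_sub_eq_sum_hybrid {n : ℕ} (a b a' b' : X × V → ℝ) (κ : (Fin n → X) → M → ℝ) :
    relEntropy (observedLaw (tensor fun _ => a) κ) (observedLaw (tensor fun _ => a') κ) -
        relEntropy (observedLaw (tensor fun _ => b) κ) (observedLaw (tensor fun _ => b') κ) =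
      ∑ i, relEntropy (observedLaw a (restChannel i (hybrid (Finset.Iio i) a b) κ))
          (observedLaw a' (restChannel i (hybrid (Finset.Iio i) a' b') κ)) -
        ∑ i, relEntropy (observedLaw b (restChannel i (hybrid (Finset.Iio i) a b) κ))
          (observedLaw b' (restChannel i (hybrid (Finset.Iio i) a' b') κ)) := by
  have h := sum_insert_Iio_sub fun s : Finset (Fin n) =>
    relEntropy (observedLaw (tensor (hybrid s a b)) κ) (observedLaw (tensor (hybrid s a' b')) κ)
  rw [hybrid_univ, hybrid_univ, hybrid_empty, hybrid_empty] at h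
  rw [← h, ← Finset.sum_sub_distrib]
  refine Finset.sum_congr rfl fun i _ => ?_
  have hoff (c d : X × V → ℝ) (j : Fin n) (hj : j ≠ i) :=
    hybrid_insert_of_ne hj (Finset.Iio i) c d
  rw [relEntropy_observedLaw_tensor i, relEntropy_observedLaw_tensor i, hybrid_insert_self,
    hybrid_insert_self, restChannel_congr (hoff a b), restChannel_congr (hoff a' b'),
    hybrid_of_notMem (by simp), hybrid_of_notMem (by simp)]

end Hybridization

section GexpLowerBound

variable {X Y Z U V : Type*} [Fintype X] [Fintype Y] [Fintype Z] [Fintype V]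

/-- The standing assumptions on `P_XY, Q_XY, P_XZ, Q_XZ`: these are mass functions, those under
the same hypothesis have the same `X`-marginal, and both relative entropies are finite. -/
structure IsReceiverPair (pXY qXY : X × Y → ℝ) (pXZ qXZ : X × Z → ℝ) : Prop where
  isPMF_pXY : IsPMF pXY
  isPMF_qXY : IsPMF qXY
  isPMF_pXZ : IsPMF pXZ
  isPMF_qXZ : IsPMF qXZ
  margFst_p : margFst pXZ = margFst pXY
  margFst_q : margFst qXZ = margFst qXY
  absCont_XY : AbsCont pXY qXY
  absCont_XZ : AbsCont pXZ qXZ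

lemma isReceiverPair_pushf {Ω : Type*} [Fintype Ω] {P Q : Ω → ℝ} (hP : IsPMF P) (hQ : IsPMF Q)
    {fX : Ω → X} {fY : Ω → Y} {fZ : Ω → Z}
    (hY : klDiv (pushf P fun ω => (fX ω, fY ω)) (pushf Q fun ω => (fX ω, fY ω)) < ⊤)
    (hZ : klDiv (pushf P fun ω => (fX ω, fZ ω)) (pushf Q fun ω => (fX ω, fZ ω)) < ⊤) :
    IsReceiverPair (pushf P fun ω => (fX ω, fY ω)) (pushf Q fun ω => (fX ω, fY ω))
      (pushf P fun ω => (fX ω, fZ ω)) (pushf Q fun ω => (fX ω, fZ ω)) where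
  isPMF_pXY := hP.pushf _
  isPMF_qXY := hQ.pushf _
  isPMF_pXZ := hP.pushf _
  isPMF_qXZ := hQ.pushf _
  margFst_p := by simp only [← pushf_fst, pushf_pushf, Function.comp_def]
  margFst_q := by simp only [← pushf_fst, pushf_pushf, Function.comp_def]
  absCont_XY := absCont_of_klDiv_lt_top hY
  absCont_XZ := absCont_of_klDiv_lt_top hZ

lemma outDist_condSnd_s15 {p : X × V → ℝ} (hp : ∀ s, 0 ≤ p s) (ch : X → U → ℝ) (u : U) (c : ℝ) :
    outDist (condSnd p) (fun x => ch x u * margFst p x / c) =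
      c⁻¹ • fun v => observedLaw p ch (u, v) := by
  funext v
  simp only [outDist, condSnd, observedLaw, Pi.smul_apply, smul_eq_mul, Finset.mul_sum]
  refine Finset.sum_congr rfl fun x _ => ?_
  by_cases h : margFst p x = 0
  · have hpx := (Finset.sum_eq_zero_iff_of_nonneg fun v _ => hp (x, v)).1 h v (Finset.mem_univ v)
    simp [h, hpx]
  · field_simp

lemma sum_observedLaw_slice (p : X × V → ℝ) (ch : X → U → ℝ) (u : U) :
    ∑ v, observedLaw p ch (u, v) = ∑ x, ch x u * margFst p x := by
  simp only [observedLaw, margFst, Finset.mul_sum]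
  rw [Finset.sum_comm]
  simp only [mul_comm]

lemma klDiv_outDist_condSnd {p q : X × V → ℝ} (hp : ∀ s, 0 ≤ p s) (hq : ∀ s, 0 ≤ q s)
    {g h : X → U → ℝ} {u : U}
    (hgh : AbsCont (fun v => observedLaw p g (u, v)) fun v => observedLaw q h (u, v))
    {c d : ℝ} (hc : c ≠ 0) (hd : d ≠ 0) :
    klDiv (outDist (condSnd p) fun x => g x u * margFst p x / c)
        (outDist (condSnd q) fun x => h x u * margFst q x / d) =
      ((c⁻¹ * (relEntropy (fun v => observedLaw p g (u, v)) (fun v => observedLaw q h (u, v)) +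
        Real.log (c⁻¹ / d⁻¹) * ∑ x, g x u * margFst p x) : ℝ) : EReal) := by
  rw [outDist_condSnd_s15 hp, outDist_condSnd_s15 hq, klDiv_of_absCont (hgh.smul _ (inv_ne_zero hd)),
    relEntropy_smul_smul hgh (inv_ne_zero hc) (inv_ne_zero hd), sum_observedLaw_slice]

lemma relEntropy_eq_zero_of_sum_eq_zero {p : V → ℝ} (hp : ∀ v, 0 ≤ p v) (h : ∑ v, p v = 0)
    (q : V → ℝ) : relEntropy p q = 0 := by
  have hp0 := (Finset.sum_eq_zero_iff_of_nonneg fun v _ => hp v).1 h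
  exact Finset.sum_eq_zero fun v hv => by rw [hp0 v hv, zero_mul]

lemma klDiv_sub_klDiv_le_fdiff (pYgX : X → Y → ℝ) (pZgX : X → Z → ℝ) (qYgX : X → Y → ℝ)
    (qZgX : X → Z → ℝ) (pX' : X → ℝ) {qX qhX : X → ℝ} (hqhX : IsPMF qhX) (hac : AbsCont qhX qX) :
    klDiv (outDist pYgX pX') (outDist qYgX qhX) - klDiv (outDist pZgX pX') (outDist qZgX qhX) ≤
      fdiff pYgX pZgX qYgX qZgX qX pX' :=
  le_sSup ⟨qhX, hqhX, hac, rfl⟩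

variable {pXY qXY : X × Y → ℝ} {pXZ qXZ : X × Z → ℝ} {g h : X → U → ℝ}

lemma relEntropy_slice_sub_le_mul_fdiff (H : IsReceiverPair pXY qXY pXZ qXZ)
    (hg : ∀ x u, 0 ≤ g x u) (hh : ∀ x u, 0 ≤ h x u) (hgh : ∀ x, AbsCont (g x) (h x)) (u : U) :
    ((relEntropy (fun y => observedLaw pXY g (u, y)) (fun y => observedLaw qXY h (u, y)) -
        relEntropy (fun z => observedLaw pXZ g (u, z)) (fun z => observedLaw qXZ h (u, z)) : ℝ) :
        EReal) ≤
      ((∑ x, g x u * margFst pXY x : ℝ) : EReal) *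
        fdiff (condSnd pXY) (condSnd pXZ) (condSnd qXY) (condSnd qXZ) (margFst qXY)
          (fun x => g x u * margFst pXY x / ∑ x', g x' u * margFst pXY x') := by
  set c := ∑ x, g x u * margFst pXY x
  set d := ∑ x, h x u * margFst qXY x with hd
  have hcY : ∑ y, observedLaw pXY g (u, y) = c := sum_observedLaw_slice ..
  have hcZ : ∑ z, observedLaw pXZ g (u, z) = c := by rw [sum_observedLaw_slice, H.margFst_p]
  have hnonneg : 0 ≤ c := hcY ▸ Finset.sum_nonneg fun y _ => observedLaw_nonneg H.isPMF_pXY.1 hg _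
  rcases hnonneg.eq_or_lt with hc0 | hcpos
  · rw [relEntropy_eq_zero_of_sum_eq_zero (fun y => observedLaw_nonneg H.isPMF_pXY.1 hg _)
      (hcY.trans hc0.symm), relEntropy_eq_zero_of_sum_eq_zero
      (fun z => observedLaw_nonneg H.isPMF_pXZ.1 hg _) (hcZ.trans hc0.symm), ← hc0]
    simp
  have hY : AbsCont (fun y => observedLaw pXY g (u, y)) fun y => observedLaw qXY h (u, y) :=
    fun y => H.absCont_XY.observedLaw H.isPMF_qXY.1 hgh hh (u, y)
  have hZ : AbsCont (fun z => observedLaw pXZ g (u, z)) fun z => observedLaw qXZ h (u, z) :=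
    fun z => H.absCont_XZ.observedLaw H.isPMF_qXZ.1 hgh hh (u, z)
  have hdpos : 0 < d := by
    rw [hd, ← sum_observedLaw_slice]
    exact hY.sum_pos (fun y => observedLaw_nonneg H.isPMF_qXY.1 hh _) (hcY.symm ▸ hcpos)
  have hmarg (x : X) : 0 ≤ margFst qXY x := Finset.sum_nonneg fun y _ => H.isPMF_qXY.1 (x, y)
  have hklY := klDiv_outDist_condSnd H.isPMF_pXY.1 H.isPMF_qXY.1 hY hcpos.ne' hdpos.ne'
  have hklZ := klDiv_outDist_condSnd H.isPMF_pXZ.1 H.isPMF_qXZ.1 hZ hcpos.ne' hdpos.ne'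
  rw [H.margFst_p, H.margFst_q] at hklZ
  have hposterior : IsPMF fun x => h x u * margFst qXY x / d :=
    ⟨fun x => div_nonneg (mul_nonneg (hh x u) (hmarg x)) hdpos.le,
      by rw [← Finset.sum_div, div_self hdpos.ne']⟩
  have hfdiff := klDiv_sub_klDiv_le_fdiff (condSnd pXY) (condSnd pXZ) (condSnd qXY) (condSnd qXZ)
    (fun x => g x u * margFst pXY x / c) (qX := margFst qXY) hposterior fun x hx => by simp [hx]
  rw [hklY, hklZ] at hfdiff
  refine le_trans (le_of_eq ?_) (mul_le_mul_of_nonneg_left hfdiff (EReal.coe_nonneg.2 hnonneg))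
  simp only [← EReal.coe_sub, ← EReal.coe_mul]
  congr 1
  field_simp
  ring

lemma relEntropy_sub_le_Gexp [Fintype U] (H : IsReceiverPair pXY qXY pXZ qXZ) {R : ℝ}
    (hg : ∀ x, IsPMF (g x)) (hh : ∀ x u, 0 ≤ h x u) (hgh : ∀ x, AbsCont (g x) (h x))
    (hY : markovMI pXY g ≤ R) (hZ : markovMI pXZ g ≤ R) :
    ((relEntropy (observedLaw pXY g) (observedLaw qXY h) -
      relEntropy (observedLaw pXZ g) (observedLaw qXZ h) : ℝ) : EReal) ≤
        Gexp pXY qXY pXZ qXZ R := by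
  let e := (Fintype.equivFin U).symm
  have hge (x : X) : IsPMF (g x ∘ e) :=
    ⟨fun k => (hg x).1 _, (e.sum_comp (g x)).trans (hg x).2⟩
  refine le_trans ?_ (le_sSup ⟨Fintype.card U, fun x => g x ∘ e, hge,
    (markovMI_comp_equiv H.isPMF_pXY.1 hg e).trans_le hY,
    (markovMI_comp_equiv H.isPMF_pXZ.1 hg e).trans_le hZ, rfl⟩)
  rw [relEntropy_prod, relEntropy_prod, ← Finset.sum_sub_distrib, ← e.sum_comp]
  let coeHom : ℝ →+ EReal := ⟨⟨Real.toEReal, EReal.coe_zero⟩, EReal.coe_add⟩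
  refine (map_sum coeHom _ _).trans_le (Finset.sum_le_sum fun k _ => ?_)
  exact relEntropy_slice_sub_le_mul_fdiff H (fun x => (hg x).1) hh hgh (e k)

end GexpLowerBound

section AuxiliaryChannel

variable {X M V : Type*} [Fintype X] {n : ℕ}

/-- The channel from `X` to the auxiliary variable `(T, M, Y_j : j < T, Z_j : j > T)` with `T` a
uniform time index, where `a` and `b` are the laws of `(X, Y)` and `(X, Z)`, whose receivers share
the alphabet `V`. -/
def auxChannel (a b : X × V → ℝ) (κ : (Fin n → X) → M → ℝ) :
    X → (Σ i : Fin n, M × ({j // j ≠ i} → V)) → ℝ :=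
  timeShare fun i => restChannel i (hybrid (Finset.Iio i) a b) κ

lemma absCont_auxChannel {a b a' b' : X × V → ℝ} (haa' : AbsCont a a') (hbb' : AbsCont b b')
    (ha' : ∀ s, 0 ≤ a' s) (hb' : ∀ s, 0 ≤ b' s) {κ : (Fin n → X) → M → ℝ}
    (hκ : ∀ x k, 0 ≤ κ x k) (x : X) : AbsCont (auxChannel a b κ x) (auxChannel a' b' κ x) :=
  AbsCont.timeShare (fun i => absCont_restChannel i (hybrid_forall₂ (Finset.Iio i) haa' hbb')
    (hybrid_forall (p := fun c : X × V → ℝ => ∀ s, 0 ≤ c s) (Finset.Iio i) ha' hb') hκ) x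

variable [Fintype M] [Fintype V]

lemma isPMF_auxChannel [NeZero n] {a b : X × V → ℝ} (ha : IsPMF a) (hb : IsPMF b)
    {κ : (Fin n → X) → M → ℝ} (hκ : ∀ x, IsPMF (κ x)) (x : X) : IsPMF (auxChannel a b κ x) :=
  isPMF_timeShare (fun i => isPMF_restChannel i (hybrid_forall (Finset.Iio i) ha hb) hκ) x

lemma relEntropy_sub_eq_auxChannel (a b a' b' : X × V → ℝ) (κ : (Fin n → X) → M → ℝ) :
    (n : ℝ)⁻¹ *
        (relEntropy (observedLaw (tensor fun _ => a) κ) (observedLaw (tensor fun _ => a') κ) -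
          relEntropy (observedLaw (tensor fun _ => b) κ) (observedLaw (tensor fun _ => b') κ)) =
      relEntropy (observedLaw a (auxChannel a b κ)) (observedLaw a' (auxChannel a' b' κ)) -
        relEntropy (observedLaw b (auxChannel a b κ)) (observedLaw b' (auxChannel a' b' κ)) := by
  rw [relEntropy_sub_eq_sum_hybrid, mul_sub]
  simp only [auxChannel, relEntropy_observedLaw_timeShare, Fintype.card_fin]

variable [NeZero n] [Nonempty M] {a b : X × V → ℝ} {κ : (Fin n → X) → M → ℝ} {R : ℝ}

lemma markovMI_auxChannel_left_le (ha : IsPMF a) (hb : IsPMF b) (hab : margFst a = margFst b)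
    (hκ : ∀ x, IsPMF (κ x)) (hM : Real.log (Fintype.card M) ≤ n * R) :
    markovMI a (auxChannel a b κ) ≤ R := by
  have hch (i : Fin n) := isPMF_restChannel i (hybrid_forall (Finset.Iio i) ha hb) hκ
  rw [auxChannel, markovMI_timeShare ha.1 hch, Fintype.card_fin,
    inv_mul_le_iff₀ (Nat.cast_pos.2 (NeZero.pos n))]
  exact (sum_markovMI_hybrid_le (by simp) sum_insert_Iio_sub ha hb hab hκ).trans hM

lemma markovMI_auxChannel_right_le (ha : IsPMF a) (hb : IsPMF b) (hab : margFst a = margFst b)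
    (hκ : ∀ x, IsPMF (κ x)) (hM : Real.log (Fintype.card M) ≤ n * R) :
    markovMI b (auxChannel a b κ) ≤ R := by
  have hch (i : Fin n) := isPMF_restChannel i (hybrid_forall (Finset.Ioi i) hb ha) hκ
  have hswap (i : Fin n) : restChannel i (hybrid (Finset.Iio i) a b) κ =
      restChannel i (hybrid (Finset.Ioi i) b a) κ :=
    restChannel_congr (fun j hj => hybrid_Iio_eq_hybrid_Ioi hj a b) κ
  simp only [auxChannel, hswap]
  rw [markovMI_timeShare hb.1 hch, Fintype.card_fin,
    inv_mul_le_iff₀ (Nat.cast_pos.2 (NeZero.pos n))]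
  exact (sum_markovMI_hybrid_le (by simp) sum_insert_Ioi_sub hb ha hab.symm hκ).trans hM

end AuxiliaryChannel

section CommonAlphabet

variable {X Y Z U V W M : Type*} [Fintype X] [Fintype Y] [Fintype Z] [Fintype U] [Fintype V]
  [Fintype W] [Fintype M]

lemma relEntropy_observedLaw_pushf_of_injective {f : V → W} (hf : Function.Injective f)
    (p q : X × V → ℝ) (g h : X → U → ℝ) :
    relEntropy (observedLaw (pushf p (Prod.map id f)) g)
        (observedLaw (pushf q (Prod.map id f)) h) =
      relEntropy (observedLaw p g) (observedLaw q h) := by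
  rw [observedLaw_pushf_map_id, observedLaw_pushf_map_id,
    relEntropy_pushf_of_injective (Function.injective_id.prodMap hf)]

lemma relEntropy_observedLaw_tensor_pushf_of_injective {n : ℕ} {f : V → W}
    (hf : Function.Injective f) (p q : X × V → ℝ) (κ : (Fin n → X) → M → ℝ) :
    relEntropy (observedLaw (tensor fun _ => pushf p (Prod.map id f)) κ)
        (observedLaw (tensor fun _ => pushf q (Prod.map id f)) κ) =
      relEntropy (observedLaw (tensor fun _ => p) κ) (observedLaw (tensor fun _ => q) κ) := by
  rw [tensor_pushf_map_id fun _ => p, tensor_pushf_map_id fun _ => q,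
    relEntropy_observedLaw_pushf_of_injective fun v v' h => funext fun i => hf (congrFun h i)]

lemma inv_mul_relEntropy_sub_le_Gexp {pXY qXY : X × Y → ℝ} {pXZ qXZ : X × Z → ℝ}
    (H : IsReceiverPair pXY qXY pXZ qXZ) {R : ℝ} {n : ℕ} [NeZero n] [Nonempty M]
    (hM : Real.log (Fintype.card M) ≤ n * R) {κ : (Fin n → X) → M → ℝ} (hκ : ∀ x, IsPMF (κ x)) :
    (((n : ℝ)⁻¹ *
      (relEntropy (observedLaw (tensor fun _ => pXY) κ) (observedLaw (tensor fun _ => qXY) κ) -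
        relEntropy (observedLaw (tensor fun _ => pXZ) κ) (observedLaw (tensor fun _ => qXZ) κ)) :
        ℝ) : EReal) ≤ Gexp pXY qXY pXZ qXZ R := by
  have hinl : Function.Injective (Sum.inl : Y → Y ⊕ Z) := Sum.inl_injective
  have hinr : Function.Injective (Sum.inr : Z → Y ⊕ Z) := Sum.inr_injective
  -- Hybrid blocks mix letters of `Y` and `Z`, hence the common alphabet `Y ⊕ Z`.
  let a : X × (Y ⊕ Z) → ℝ := pushf pXY (Prod.map id Sum.inl)
  let b : X × (Y ⊕ Z) → ℝ := pushf pXZ (Prod.map id Sum.inr)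
  let a' : X × (Y ⊕ Z) → ℝ := pushf qXY (Prod.map id Sum.inl)
  let b' : X × (Y ⊕ Z) → ℝ := pushf qXZ (Prod.map id Sum.inr)
  have ha : IsPMF a := H.isPMF_pXY.pushf _
  have hb : IsPMF b := H.isPMF_pXZ.pushf _
  have ha' : IsPMF a' := H.isPMF_qXY.pushf _
  have hb' : IsPMF b' := H.isPMF_qXZ.pushf _
  have hab : margFst a = margFst b := by
    rw [margFst_pushf (f := Prod.map id Sum.inl) pXY fun _ => rfl,
      margFst_pushf (f := Prod.map id Sum.inr) pXZ fun _ => rfl, H.margFst_p]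
  have hκ0 := fun x => (hκ x).1
  have hg : ∀ x, IsPMF (auxChannel a b κ x) := isPMF_auxChannel ha hb hκ
  have hY := markovMI_auxChannel_left_le ha hb hab hκ hM
  have hZ := markovMI_auxChannel_right_le ha hb hab hκ hM
  rw [markovMI_pushf_map_id_of_injective hinl _ fun x => (hg x).2] at hY
  rw [markovMI_pushf_map_id_of_injective hinr _ fun x => (hg x).2] at hZ
  have hsingle := relEntropy_sub_eq_auxChannel a b a' b' κ
  simp only [a, b, a', b', relEntropy_observedLaw_tensor_pushf_of_injective hinl,
    relEntropy_observedLaw_tensor_pushf_of_injective hinr,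
    relEntropy_observedLaw_pushf_of_injective hinl,
    relEntropy_observedLaw_pushf_of_injective hinr] at hsingle
  rw [hsingle]
  exact relEntropy_sub_le_Gexp H hg (fun x => (isPMF_auxChannel ha' hb' hκ x).1)
    (absCont_auxChannel (H.absCont_XY.pushf H.isPMF_qXY.1 _) (H.absCont_XZ.pushf H.isPMF_qXZ.1 _)
      ha'.1 hb'.1 hκ0) hY hZ

end CommonAlphabet

section ErrorExponent

variable {X Y Z V W : Type*} [Fintype X] [Fintype Y] [Fintype Z] [Fintype V] [Fintype W]

lemma log_card_fin_two_pow_floor_le {r : ℝ} (hr : 0 ≤ r) :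
    Real.log (Fintype.card (Fin (2 ^ ⌊r⌋₊))) ≤ r := by
  rw [Fintype.card_fin, Nat.cast_pow, Real.log_pow, Nat.cast_ofNat]
  have hlog : Real.log 2 ≤ 1 := (Real.log_le_sub_one_of_pos two_pos).trans_eq (by norm_num)
  calc (⌊r⌋₊ : ℝ) * Real.log 2 ≤ ⌊r⌋₊ * 1 := by gcongr
    _ ≤ r := (mul_one _).trans_le (Nat.floor_le hr)

lemma errExp_pushf_le {p q : X × V → ℝ} (hp : ∀ s, 0 ≤ p s) (hq : ∀ s, 0 ≤ q s) (f : V → W)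
    (R : ℝ) :
    errExp (pushf p (Prod.map id f)) (pushf q (Prod.map id f)) R ≤ errExp p q R := by
  refine sSup_le ?_
  rintro _ ⟨n, hn, κ, hκ, rfl⟩
  refine le_trans ?_ (le_sSup ⟨n, hn, κ, hκ, rfl⟩)
  refine mul_le_mul_of_nonneg_left ?_ (EReal.coe_nonneg.2 (by positivity))
  have hblock (p : X × V → ℝ) : observedLaw (tensor fun _ : Fin n => pushf p (Prod.map id f)) κ =
      pushf (observedLaw (tensor fun _ => p) κ) (Prod.map id fun v i => f (v i)) := by
    rw [tensor_pushf_map_id fun _ => p, observedLaw_pushf_map_id]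
  have hκ0 := fun x => (hκ x).1
  calc klDiv (observedLaw (tensor fun _ : Fin n => pushf p (Prod.map id f)) κ)
        (observedLaw (tensor fun _ : Fin n => pushf q (Prod.map id f)) κ)
      = klDiv (pushf (observedLaw (tensor fun _ => p) κ) (Prod.map id fun v i => f (v i)))
          (pushf (observedLaw (tensor fun _ => q) κ) (Prod.map id fun v i => f (v i))) := by
        rw [hblock, hblock]
    _ ≤ klDiv (observedLaw (tensor fun _ => p) κ) (observedLaw (tensor fun _ => q) κ) :=
        klDiv_pushf_le (observedLaw_nonneg (tensor_nonneg fun _ => hp) hκ0)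
          (observedLaw_nonneg (tensor_nonneg fun _ => hq) hκ0) _

lemma errExp_le_Gexp_add_errExp {pXY qXY : X × Y → ℝ} {pXZ qXZ : X × Z → ℝ}
    (H : IsReceiverPair pXY qXY pXZ qXZ) {R : ℝ} (hR : 0 ≤ R) :
    errExp pXY qXY R ≤ Gexp pXY qXY pXZ qXZ R + errExp pXZ qXZ R := by
  refine sSup_le ?_
  rintro _ ⟨n, hn, κ, hκ, rfl⟩
  have : NeZero n := ⟨hn.ne'⟩
  have hκ0 := fun x => (hκ x).1
  have hgap := inv_mul_relEntropy_sub_le_Gexp H (log_card_fin_two_pow_floor_le (by positivity)) hκ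
  set dY := relEntropy (observedLaw (tensor fun _ => pXY) κ) (observedLaw (tensor fun _ => qXY) κ)
  set dZ := relEntropy (observedLaw (tensor fun _ => pXZ) κ) (observedLaw (tensor fun _ => qXZ) κ)
  have hY : klDiv (observedLaw (tensor fun _ => pXY) κ) (observedLaw (tensor fun _ => qXY) κ) =
      (dY : EReal) :=
    klDiv_of_absCont <| (AbsCont.tensor fun _ => H.absCont_XY).observedLaw
      (tensor_nonneg fun _ => H.isPMF_qXY.1) (fun _ _ h => h) hκ0
  have hZ : klDiv (observedLaw (tensor fun _ => pXZ) κ) (observedLaw (tensor fun _ => qXZ) κ) =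
      (dZ : EReal) :=
    klDiv_of_absCont <| (AbsCont.tensor fun _ => H.absCont_XZ).observedLaw
      (tensor_nonneg fun _ => H.isPMF_qXZ.1) (fun _ _ h => h) hκ0
  calc (((n : ℝ)⁻¹ : ℝ) : EReal) *
        klDiv (observedLaw (tensor fun _ => pXY) κ) (observedLaw (tensor fun _ => qXY) κ)
      = (((n : ℝ)⁻¹ * (dY - dZ) : ℝ) : EReal) + (((n : ℝ)⁻¹ : ℝ) : EReal) * (dZ : EReal) := by
        rw [hY, ← EReal.coe_mul, ← EReal.coe_mul, ← EReal.coe_add]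
        congr 1
        ring
    _ ≤ Gexp pXY qXY pXZ qXZ R + errExp pXZ qXZ R :=
        add_le_add hgap (le_sSup ⟨n, hn, κ, hκ, congrArg _ hZ.symm⟩)

end ErrorExponent

/-- With `Y' = (Y,J)` and `Z' = (Z,J)`:
`E_{P_XY,Q_XY}(R) ≤ G_{P_XY',Q_XY',P_XZ',Q_XZ'}(R) + E_{P_XZ',Q_XZ'}(R)`. -/
theorem augmented_receiver_bound {X Y Z J : Type*}
    [Fintype X] [Fintype Y] [Fintype Z] [Fintype J]
    (R : ℝ) (hR : 0 < R)
    (P Q : X × Y × Z × J → ℝ) (hP : IsPMF P) (hQ : IsPMF Q)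
    (hXYJ : klDiv (pushf P (fun w => (w.1, w.2.1, w.2.2.2)))
        (pushf Q (fun w => (w.1, w.2.1, w.2.2.2))) < ⊤)
    (hXZJ : klDiv (pushf P (fun w => (w.1, w.2.2.1, w.2.2.2)))
        (pushf Q (fun w => (w.1, w.2.2.1, w.2.2.2))) < ⊤) :
    errExp (pushf P (fun w => (w.1, w.2.1))) (pushf Q (fun w => (w.1, w.2.1))) R
      ≤ Gexp (pushf P (fun w => (w.1, w.2.1, w.2.2.2)))
          (pushf Q (fun w => (w.1, w.2.1, w.2.2.2)))
          (pushf P (fun w => (w.1, w.2.2.1, w.2.2.2)))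
          (pushf Q (fun w => (w.1, w.2.2.1, w.2.2.2))) R
        + errExp (pushf P (fun w => (w.1, w.2.2.1, w.2.2.2)))
            (pushf Q (fun w => (w.1, w.2.2.1, w.2.2.2))) R := by
  have H := isReceiverPair_pushf hP hQ hXYJ hXZJ
  have hdrop (S : X × Y × Z × J → ℝ) : pushf S (fun w => (w.1, w.2.1)) =
      pushf (pushf S fun w => (w.1, w.2.1, w.2.2.2)) (Prod.map id Prod.fst) :=
    (pushf_pushf S (fun w => (w.1, w.2.1, w.2.2.2)) (Prod.map id Prod.fst)).symm
  rw [hdrop P, hdrop Q]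
  exact (errExp_pushf_le H.isPMF_pXY.1 H.isPMF_qXY.1 Prod.fst R).trans
    (errExp_le_Gexp_add_errExp H hR.le)

end
end

section
/- Let 0 ≤ ρ₁ < ρ₀ < 1 and R > 0, set ρ = (ρ₀ − ρ₁)/(1 − ρ₁), Δ = (1 − ρ)(1 + ρ₀) / ((e^{2R} − 1) + (1 − ρ)(1 + ρ₀)), and define g : (0,∞) → ℝ by g(s) = ½ ln( (ρ₁ s + 1 − ρ₁) / (ρ² s + (1 − ρ²)(ρ₁ s + 1 − ρ₁)) ). Then (i) g is strictly decreasing on (0,∞), and (ii) the supremum of g(s) over all s ≥ max( (1 − ρ₁)/(e^{2R} − ρ₁), (1 − ρ₀²)/(e^{2R} − ρ₀²) ) is attained at ŝ = max( (1 − ρ₁)/(e^{2R} − ρ₁), (1 − ρ₀²)/(e^{2R} − ρ₀²) ) and equals ½ ln( min{ 1/(1 − ρ² + ρ²Δ), 1/(1 − ρ² + ρ² e^{−2R}) } ). -/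
/-!
Write `v` for the ratio `Var(X | U, Z) / Var(X | Z)`, an increasing function of `s = Var(X | U)`.
Regressing `Y` on `X` given `Z` gives `Var(Y | U, Z) / Var(Y | Z) = 1 - ρ² + ρ² v`, so that
`g(s) = ½ log (1 / (1 - ρ² + ρ² v))` decreases in `v`, hence in `s`. The ratio satisfies
`1/v - 1 = (1 - c) (1/s - 1)`, where `c` is the squared correlation of `X` and `Z`. In the
coordinate `1/s - 1` the lower bounds on `s` are `(e^(2R) - 1) / (1 - ρ₁)` and
`(e^(2R) - 1) / (1 - ρ₀²)`, and multiplying by `1 - ρ₁` shows that `v` takes the values `e^(-2R)`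
and `Δ` there. Monotonicity turns the maximum of the bounds into the maximum of these values, and
then into the minimum of the reciprocals.
-/

noncomputable section

open Set

/-- The ratio `Var(X | U, Z) / Var(X | Z)` as a function of `s = Var(X | U)`, for jointly Gaussian
variables with `Var(X) = 1` and Markov chain `U - X - Z`. Here `c` is the *squared* correlation of
`X` and `Z`, so that `I(X; U | Z) = -½ log (condVarRatio c s)`. -/
def condVarRatio (c s : ℝ) : ℝ := s / (c * s + 1 - c)

/-- The smallest conditional variance `s = Var(X | U)` compatible with the rate constraint
`I(X; U | Z) ≤ R`, where `c` is the squared correlation of `X` and `Z`. -/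
def minCondVar (c R : ℝ) : ℝ := (1 - c) / (Real.exp (2 * R) - c)

/-- The information `I(Y; U | Z)` as a function of `v = Var(X | U, Z) / Var(X | Z)`, where `ρ` is
the correlation of `X` and `Y` given `Z`. -/
def gaussianCondInfo (ρ v : ℝ) : ℝ := 1 / 2 * Real.log (1 / (1 - ρ ^ 2 + ρ ^ 2 * v))

section CondVarRatio

variable {c d s R : ℝ}

lemma condVarRatio_denom_pos (hc₀ : 0 ≤ c) (hc₁ : c < 1) (hs : 0 ≤ s) : 0 < c * s + 1 - c := by
  linarith [mul_nonneg hc₀ hs]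

lemma condVarRatio_nonneg (hc₀ : 0 ≤ c) (hc₁ : c < 1) (hs : 0 ≤ s) : 0 ≤ condVarRatio c s :=
  div_nonneg hs (condVarRatio_denom_pos hc₀ hc₁ hs).le

lemma strictMonoOn_condVarRatio (hc₀ : 0 ≤ c) (hc₁ : c < 1) :
    StrictMonoOn (condVarRatio c) (Ici 0) := by
  intro s hs t ht hst
  rw [condVarRatio, condVarRatio,
    div_lt_div_iff₀ (condVarRatio_denom_pos hc₀ hc₁ hs) (condVarRatio_denom_pos hc₀ hc₁ ht)]
  have h : (1 - c) * s < (1 - c) * t := mul_lt_mul_of_pos_left hst (sub_pos.mpr hc₁)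
  linarith

lemma inv_condVarRatio (hs : s ≠ 0) : (condVarRatio c s)⁻¹ = 1 + (1 - c) * (s⁻¹ - 1) := by
  rw [condVarRatio, inv_div]
  field_simp
  ring

lemma inv_minCondVar (hc : c ≠ 1) :
    (minCondVar c R)⁻¹ = 1 + (Real.exp (2 * R) - 1) / (1 - c) := by
  have hc' : 1 - c ≠ 0 := sub_ne_zero.mpr hc.symm
  rw [minCondVar, inv_div]
  field_simp
  ring

lemma minCondVar_pos (hc : c < 1) (hR : 0 ≤ R) : 0 < minCondVar c R := by
  have hcR : c < Real.exp (2 * R) := hc.trans_le (Real.one_le_exp (by positivity))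
  exact div_pos (sub_pos.mpr hc) (sub_pos.mpr hcR)

lemma condVarRatio_minCondVar (hd : d < 1) (hR : 0 ≤ R) :
    condVarRatio c (minCondVar d R) =
      (1 + (1 - c) / (1 - d) * (Real.exp (2 * R) - 1))⁻¹ := by
  rw [← inv_inv (condVarRatio c _), inv_condVarRatio (minCondVar_pos hd hR).ne',
    inv_minCondVar hd.ne, add_sub_cancel_left, mul_div_left_comm, mul_comm]

lemma condVarRatio_minCondVar_self (hc : c < 1) (hR : 0 ≤ R) :
    condVarRatio c (minCondVar c R) = Real.exp (-(2 * R)) := by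
  rw [condVarRatio_minCondVar hc hR, div_self (sub_pos.mpr hc).ne', one_mul, add_sub_cancel,
    Real.exp_neg]

lemma condVarRatio_minCondVar_sq {ρ₀ ρ₁ : ℝ} (hρ₁ : ρ₁ ≠ 1) (hρ₀ : ρ₀ ^ 2 < 1) (hR : 0 ≤ R) :
    condVarRatio ρ₁ (minCondVar (ρ₀ ^ 2) R) =
      (1 - (ρ₀ - ρ₁) / (1 - ρ₁)) * (1 + ρ₀) /
        ((Real.exp (2 * R) - 1) + (1 - (ρ₀ - ρ₁) / (1 - ρ₁)) * (1 + ρ₀)) := by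
  have hρ₁' : 1 - ρ₁ ≠ 0 := sub_ne_zero.mpr hρ₁.symm
  have hρ₀' : 1 - ρ₀ ^ 2 ≠ 0 := (sub_pos.mpr hρ₀).ne'
  have hfactor : (1 - (ρ₀ - ρ₁) / (1 - ρ₁)) * (1 + ρ₀) = (1 - ρ₀ ^ 2) / (1 - ρ₁) := by
    field_simp
    ring
  rw [condVarRatio_minCondVar hρ₀ hR, hfactor, ← inv_div (1 - ρ₀ ^ 2)]
  set k := (1 - ρ₀ ^ 2) / (1 - ρ₁)
  have hk : k ≠ 0 := div_ne_zero hρ₀' hρ₁'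
  rw [← inv_div, add_div, div_self hk, add_comm, div_eq_inv_mul]

end CondVarRatio

section GaussianCondInfo

variable {ρ c s v w : ℝ}

lemma gaussianCondInfo_condVarRatio (h : c * s + 1 - c ≠ 0) :
    gaussianCondInfo ρ (condVarRatio c s) = 1 / 2 * Real.log
      ((c * s + 1 - c) / (ρ ^ 2 * s + (1 - ρ ^ 2) * (c * s + 1 - c))) := by
  have hratio : 1 - ρ ^ 2 + ρ ^ 2 * condVarRatio c s =
      (ρ ^ 2 * s + (1 - ρ ^ 2) * (c * s + 1 - c)) / (c * s + 1 - c) := by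
    rw [condVarRatio, add_div, mul_div_cancel_right₀ _ h, mul_div_assoc, add_comm]
  rw [gaussianCondInfo, hratio, one_div_div]

lemma one_sub_sq_add_sq_mul_pos (hρ : |ρ| < 1) (hv : 0 ≤ v) : 0 < 1 - ρ ^ 2 + ρ ^ 2 * v :=
  add_pos_of_pos_of_nonneg (sub_pos.mpr ((sq_lt_one_iff_abs_lt_one ρ).mpr hρ)) (by positivity)

lemma strictAntiOn_one_div_one_sub_sq_add_sq_mul (hρ₀ : ρ ≠ 0) (hρ₁ : |ρ| < 1) :
    StrictAntiOn (fun v ↦ 1 / (1 - ρ ^ 2 + ρ ^ 2 * v)) (Ici 0) := by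
  intro v hv w _ hvw
  have hpos : 0 < 1 - ρ ^ 2 + ρ ^ 2 * v := one_sub_sq_add_sq_mul_pos hρ₁ hv
  dsimp only
  gcongr

lemma strictAntiOn_gaussianCondInfo (hρ₀ : ρ ≠ 0) (hρ₁ : |ρ| < 1) :
    StrictAntiOn (gaussianCondInfo ρ) (Ici 0) := by
  intro v hv w hw hvw
  have hpos : 0 < 1 / (1 - ρ ^ 2 + ρ ^ 2 * w) :=
    one_div_pos.mpr (one_sub_sq_add_sq_mul_pos hρ₁ hw)
  exact mul_lt_mul_of_pos_left (Real.log_lt_log hpos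
    (strictAntiOn_one_div_one_sub_sq_add_sq_mul hρ₀ hρ₁ hv hw hvw)) one_half_pos

lemma gaussianCondInfo_max (hρ₀ : ρ ≠ 0) (hρ₁ : |ρ| < 1) (hv : 0 ≤ v) (hw : 0 ≤ w) :
    gaussianCondInfo ρ (max v w) = 1 / 2 * Real.log
      (min (1 / (1 - ρ ^ 2 + ρ ^ 2 * v)) (1 / (1 - ρ ^ 2 + ρ ^ 2 * w))) :=
  congrArg (1 / 2 * Real.log ·)
    ((strictAntiOn_one_div_one_sub_sq_add_sq_mul hρ₀ hρ₁).antitoneOn.map_max hv hw)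

lemma strictAntiOn_gaussianCondInfo_comp_condVarRatio (hρ₀ : ρ ≠ 0) (hρ₁ : |ρ| < 1)
    (hc₀ : 0 ≤ c) (hc₁ : c < 1) :
    StrictAntiOn (gaussianCondInfo ρ ∘ condVarRatio c) (Ici 0) :=
  (strictAntiOn_gaussianCondInfo hρ₀ hρ₁).comp_strictMonoOn (strictMonoOn_condVarRatio hc₀ hc₁)
    fun _ ↦ condVarRatio_nonneg hc₀ hc₁

end GaussianCondInfo

theorem gaussian_exponent_evaluation_general
    (ρ₀ ρ₁ R : ℝ) (h1 : 0 ≤ ρ₁) (h2 : ρ₀ ≠ ρ₁) (h3 : |ρ₀ - ρ₁| < 1 - ρ₁) (hR : 0 ≤ R)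
    (ρ Δ : ℝ)
    (hρ : ρ = (ρ₀ - ρ₁) / (1 - ρ₁))
    (hΔ : Δ = (1 - ρ) * (1 + ρ₀) / ((Real.exp (2 * R) - 1) + (1 - ρ) * (1 + ρ₀)))
    (g : ℝ → ℝ)
    (hg : ∀ s, g s = (1 / 2) * Real.log
      ((ρ₁ * s + 1 - ρ₁) / (ρ ^ 2 * s + (1 - ρ ^ 2) * (ρ₁ * s + 1 - ρ₁))))
    (shat : ℝ)
    (hshat : shat = max ((1 - ρ₁) / (Real.exp (2 * R) - ρ₁))
      ((1 - ρ₀ ^ 2) / (Real.exp (2 * R) - ρ₀ ^ 2))) :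
    StrictAntiOn g (Ioi 0) ∧
    IsGreatest (g '' Ici shat) (g shat) ∧
    g shat = (1 / 2) * Real.log
      (min (1 / (1 - ρ ^ 2 + ρ ^ 2 * Δ))
        (1 / (1 - ρ ^ 2 + ρ ^ 2 * Real.exp (-(2 * R))))) := by
  have hρ₁ : 0 < 1 - ρ₁ := (abs_nonneg _).trans_lt h3
  have hρ₁_lt : ρ₁ < 1 := sub_pos.mp hρ₁
  have hρ₀_sq : ρ₀ ^ 2 < 1 := by
    obtain ⟨hlower, hupper⟩ := abs_lt.mp h3
    exact (sq_lt_one_iff_abs_lt_one ρ₀).mpr (abs_lt.mpr ⟨by linarith, by linarith⟩)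
  have hρ_ne : ρ ≠ 0 := hρ ▸ div_ne_zero (sub_ne_zero.mpr h2) hρ₁.ne'
  have hρ_abs : |ρ| < 1 := by rwa [hρ, abs_div, abs_of_pos hρ₁, div_lt_one hρ₁]
  have hg_eq : EqOn (gaussianCondInfo ρ ∘ condVarRatio ρ₁) g (Ici 0) := fun s hs ↦
    (gaussianCondInfo_condVarRatio (condVarRatio_denom_pos h1 hρ₁_lt hs).ne').trans (hg s).symm
  have hanti : StrictAntiOn g (Ici 0) :=
    (strictAntiOn_gaussianCondInfo_comp_condVarRatio hρ_ne hρ_abs h1 hρ₁_lt).congr hg_eq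
  have ha : 0 ≤ minCondVar ρ₁ R := (minCondVar_pos hρ₁_lt hR).le
  have hb : 0 ≤ minCondVar (ρ₀ ^ 2) R := (minCondVar_pos hρ₀_sq hR).le
  have hs : 0 ≤ shat := hshat ▸ le_max_of_le_left ha
  have hΔ_eq : condVarRatio ρ₁ (minCondVar (ρ₀ ^ 2) R) = Δ := by
    rw [condVarRatio_minCondVar_sq hρ₁_lt.ne hρ₀_sq hR, hΔ, hρ]
  have hΔ_nonneg : 0 ≤ Δ := hΔ_eq ▸ condVarRatio_nonneg h1 hρ₁_lt hb
  have hratio : condVarRatio ρ₁ shat = max Δ (Real.exp (-(2 * R))) := by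
    rw [← hΔ_eq, ← condVarRatio_minCondVar_self hρ₁_lt hR, max_comm, hshat]
    exact (strictMonoOn_condVarRatio h1 hρ₁_lt).monotoneOn.map_max ha hb
  refine ⟨hanti.mono Ioi_subset_Ici_self,
    (hanti.antitoneOn.mono (Ici_subset_Ici.mpr hs)).map_isLeast isLeast_Ici, ?_⟩
  rw [← hg_eq hs, Function.comp_apply, hratio,
    gaussianCondInfo_max hρ_ne hρ_abs hΔ_nonneg (Real.exp_nonneg _)]

/-- The Gaussian evaluation: the function
`g(s) = ½ ln((ρ₁ s + 1 − ρ₁)/(ρ² s + (1 − ρ²)(ρ₁ s + 1 − ρ₁)))` is strictly decreasing on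
`(0,∞)`, and its supremum over `s ≥ max((1−ρ₁)/(e^{2R}−ρ₁), (1−ρ₀²)/(e^{2R}−ρ₀²))` is
attained at the left endpoint and equals
`½ ln(min{1/(1−ρ²+ρ²Δ), 1/(1−ρ²+ρ²e^{−2R})})`. -/
theorem gaussian_exponent_evaluation
    (ρ₀ ρ₁ R : ℝ) (h1 : 0 ≤ ρ₁) (h2 : ρ₁ < ρ₀) (h3 : ρ₀ < 1) (hR : 0 < R)
    (ρ Δ : ℝ)
    (hρ : ρ = (ρ₀ - ρ₁) / (1 - ρ₁))
    (hΔ : Δ = (1 - ρ) * (1 + ρ₀) / ((Real.exp (2 * R) - 1) + (1 - ρ) * (1 + ρ₀)))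
    (g : ℝ → ℝ)
    (hg : ∀ s, g s = (1 / 2) * Real.log
      ((ρ₁ * s + 1 - ρ₁) / (ρ ^ 2 * s + (1 - ρ ^ 2) * (ρ₁ * s + 1 - ρ₁))))
    (shat : ℝ)
    (hshat : shat = max ((1 - ρ₁) / (Real.exp (2 * R) - ρ₁))
      ((1 - ρ₀ ^ 2) / (Real.exp (2 * R) - ρ₀ ^ 2))) :
    StrictAntiOn g (Set.Ioi 0) ∧
    IsGreatest (g '' Set.Ici shat) (g shat) ∧
    g shat = (1 / 2) * Real.log
      (min (1 / (1 - ρ ^ 2 + ρ ^ 2 * Δ))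
        (1 / (1 - ρ ^ 2 + ρ ^ 2 * Real.exp (-(2 * R))))) := by
  have hcorr : |ρ₀ - ρ₁| < 1 - ρ₁ := by rw [abs_of_pos (sub_pos.mpr h2)]; gcongr
  exact gaussian_exponent_evaluation_general ρ₀ ρ₁ R h1 h2.ne' hcorr hR.le ρ Δ hρ hΔ g hg shat hshat

end
end
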